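/- arXiv:2112.15101 — 4 statements merged into one kernel-verified Lean document; each statement's English description precedes it below -/
import Mathlib

section
/- Let m ≥ 2 be an integer and let q < 2^{m−1}. Then there exist Δ > 1, exponents p_j ∈ (q, ∞] for j ∈ 𝒞 with ∑_{j∈𝒞} 1/p_j = 1, a real m×2m matrix Π such that Π_j Π^T is Δ-regular for every j ∈ 𝒞, and a Calderón–Zygmund kernel K̂ of order 2^{6m} in ℝ^m, such that for every constant C there is a tuple (F_j)_{j∈𝒞} of real-valued smooth compactly supported functions on ℝ^m with |∫_{ℝ^m} φ̂(−Π^T η) K̂(η) dη| > C ∏_{j∈𝒞} ‖F_j‖_{L^{p_j}(ℝ^m)}, where φ := ∏_{j∈𝒞} F_j ∘ Π_j. (Consequently the variant of the singular Brascamp–Lieb L^p theorem in which the threshold 2^{m−1} is replaced by any smaller number q is false.) -/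
open MeasureTheory Matrix
open scoped ENNReal NNReal BigOperators

noncomputable section

namespace SBL

/-- The set of corners of the `m`-dimensional cube: functions `{1,…,m} → {0,1}`. -/
abbrev Corner (m : ℕ) := Fin m → Fin 2

/-- Index type for `ℝ^{2m}`: coordinates `x^0_i` (left) and `x^1_i` (right). -/
abbrev Idx (m : ℕ) := Fin m ⊕ Fin m

/-- The coordinate of `ℝ^{2m}` selected by the corner `j` at position `i`. -/
def sel {m : ℕ} (j : Corner m) (i : Fin m) : Idx m :=
  if j i = 0 then Sum.inl i else Sum.inr i

/-- The projection `Π_j : ℝ^{2m} → ℝ^m`, `Π_j x = (x_1^{j(1)},…,x_m^{j(m)})`. -/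
def proj {m : ℕ} (j : Corner m) (x : Idx m → ℝ) : Fin m → ℝ := fun i => x (sel j i)

/-- The projection `Π_j` as an `m × 2m` matrix. -/
def projM {m : ℕ} (j : Corner m) : Matrix (Fin m) (Idx m) ℝ :=
  Matrix.of fun i k => if k = sel j i then 1 else 0

/-- `A_j := Π_j J`, the `m × m` matrix obtained by applying `Π_j` to (the columns of) a
`2m × m` matrix `J`, i.e. selecting rows of `J` according to the corner `j`. -/
def Amat {m : ℕ} (J : Matrix (Idx m) (Fin m) ℝ) (j : Corner m) : Matrix (Fin m) (Fin m) ℝ :=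
  Matrix.of fun i k => J (sel j i) k

/-- Euclidean norm on a finite pi type. -/
def en {ι : Type*} [Fintype ι] (x : ι → ℝ) : ℝ := Real.sqrt (∑ i, (x i) ^ 2)

/-- Operator norm of a matrix with respect to the Euclidean norms. -/
def opNorm {ι κ : Type*} [Fintype ι] [Fintype κ] [DecidableEq κ] (A : Matrix ι κ ℝ) : ℝ :=
  ‖LinearMap.toContinuousLinearMap (Matrix.toEuclideanLin A)‖

/-- `Δ`-regularity of a square matrix: `max(‖A‖, |det A|⁻¹) ≤ Δ` (in particular `det A ≠ 0`). -/
def IsReg {m : ℕ} (Δ : ℝ) (A : Matrix (Fin m) (Fin m) ℝ) : Prop :=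
  opNorm A ≤ Δ ∧ A.det ≠ 0 ∧ |A.det|⁻¹ ≤ Δ

/-- A Calderón–Zygmund kernel of order `n` in `ℝ^m`, given by its multiplier `K̂` on
`ℝ^m ∖ {0}`: it is `n` times continuously differentiable there and satisfies the symbol
estimates `‖D^k K̂(η)‖ ≤ |η|^{-k}` for all `k ≤ n`. -/
def IsCZ {m : ℕ} (n : ℕ) (Khat : (Fin m → ℝ) → ℂ) : Prop :=
  ContDiffOn ℝ n Khat {0}ᶜ ∧
  ∀ k : ℕ, k ≤ n → ∀ η : Fin m → ℝ, η ≠ 0 →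
    ‖iteratedFDerivWithin ℝ k Khat {0}ᶜ η‖ ≤ (en η) ^ (-(k : ℝ))

/-- Fourier transform of a (nice) function on `ℝ^{2m}`. -/
def fourierT {m : ℕ} (φ : (Idx m → ℝ) → ℝ) (ξ : Idx m → ℝ) : ℂ :=
  ∫ x : Idx m → ℝ, Complex.exp (-2 * Real.pi * Complex.I * (∑ k, x k * ξ k)) * (φ x : ℂ)

/-- The principal value `p.v. ∫_{ℝ^{2m}} (∏_j F_j(Π_j x)) K(Πx) dx`, defined as
`∫_{ℝ^m} φ̂(−Π^T η) K̂(η) dη` with `φ = ∏_j F_j ∘ Π_j`. -/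
def pv {m : ℕ} (P : Matrix (Fin m) (Idx m) ℝ) (Khat : (Fin m → ℝ) → ℂ)
    (F : Corner m → (Fin m → ℝ) → ℝ) : ℂ :=
  ∫ η : Fin m → ℝ, fourierT (fun x => ∏ j, F j (proj j x)) (-(P.transpose.mulVec η)) * Khat η

/-- Upper `m×m` block `J^0` of a `2m×m` matrix. -/
def Jb0 {m : ℕ} (J : Matrix (Idx m) (Fin m) ℝ) : Matrix (Fin m) (Fin m) ℝ :=
  J.submatrix Sum.inl id

/-- Lower `m×m` block `J^1` of a `2m×m` matrix. -/
def Jb1 {m : ℕ} (J : Matrix (Idx m) (Fin m) ℝ) : Matrix (Fin m) (Fin m) ℝ :=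
  J.submatrix Sum.inr id

/-- `Π^J := (I, −J^0 (J^1)⁻¹)`. -/
def PiJ {m : ℕ} (J : Matrix (Idx m) (Fin m) ℝ) : Matrix (Fin m) (Idx m) ℝ :=
  Matrix.fromCols 1 (-(Jb0 J * (Jb1 J)⁻¹))

/-- The dyadic cube with parameters `Q = (k, n)`: `∏_i [2^k n_i, 2^k (n_i+1))`. -/
def dC {m : ℕ} (Q : ℤ × (Fin m → ℤ)) : Set (Fin m → ℝ) :=
  {x | ∀ i, (2:ℝ)^Q.1 * (Q.2 i : ℝ) ≤ x i ∧ x i < (2:ℝ)^Q.1 * ((Q.2 i : ℝ) + 1)}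

/-- `Q*`: the cube with the same center as `Q` and three times the side length. -/
def dCstar {m : ℕ} (Q : ℤ × (Fin m → ℤ)) : Set (Fin m → ℝ) :=
  {x | ∀ i, (2:ℝ)^Q.1 * ((Q.2 i : ℝ) - 1) ≤ x i ∧ x i < (2:ℝ)^Q.1 * ((Q.2 i : ℝ) + 2)}

/-- A (1/2-)sparse collection of dyadic cubes. -/
def IsSparse {m : ℕ} (S : Set (ℤ × (Fin m → ℤ))) : Prop :=
  ∀ Q ∈ S,
    (∑' Q' : {q : ℤ × (Fin m → ℤ) // q ∈ S ∧ dC q ⊆ dC Q}, volume (dC Q'.val)) ≤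
      2 * volume (dC Q)

/-- The average `[F]_S := (|S|⁻¹ ∫_S |F|^{2^{m-1}})^{2^{1-m}}`. -/
def avg {m : ℕ} (S : Set (Fin m → ℝ)) (F : (Fin m → ℝ) → ℝ) : ℝ :=
  (((volume S).toReal)⁻¹ * ∫ x in S, |F x| ^ (2^(m-1) : ℕ)) ^ ((2:ℝ) ^ ((1:ℤ) - (m:ℤ)))

/-- The closed axis-parallel box `∏_i [a_i, b_i]`. -/
def box {m : ℕ} (a b : Fin m → ℝ) : Set (Fin m → ℝ) := {x | ∀ i, a i ≤ x i ∧ x i ≤ b i}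

/-- Reciprocal eccentricity `ε_R = (min_i |I_i|)/(max_i |I_i|)` of the box `∏_i [a_i,b_i]`. -/
def ecc {m : ℕ} (a b : Fin m → ℝ) : ℝ := (⨅ i, (b i - a i)) / (⨆ i, (b i - a i))

/-- Modified strong maximal function evaluated on a set `S`:
`sup { (ε_R^α)^{2^{1-m}} [F]_R : R ∈ ℛ, S ⊆ R }` (as an extended real). -/
def Mal {m : ℕ} (α : ℝ) (F : (Fin m → ℝ) → ℝ) (S : Set (Fin m → ℝ)) : ℝ≥0∞ :=
  ⨆ (a : Fin m → ℝ) (b : Fin m → ℝ) (_ : ∀ i, a i < b i) (_ : S ⊆ box a b),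
    ENNReal.ofReal ((ecc a b ^ α) ^ ((2:ℝ) ^ ((1:ℤ) - (m:ℤ))) * avg (box a b) F)

/-- `M_α(F)(A𝒯) := sup_{Q ∈ 𝒯} M_α(F)(AQ)`. -/
def MalTree {m : ℕ} (α : ℝ) (F : (Fin m → ℝ) → ℝ) (A : Matrix (Fin m) (Fin m) ℝ)
    (T : Set (ℤ × (Fin m → ℤ))) : ℝ≥0∞ :=
  ⨆ Q ∈ T, Mal α F (A.mulVec '' dC Q)

/-- A convex tree of dyadic cubes with top cube `Qt`. -/
def ConvexTree {m : ℕ} (T : Set (ℤ × (Fin m → ℤ))) (Qt : ℤ × (Fin m → ℤ)) : Prop :=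
  Qt ∈ T ∧ (∀ Q ∈ T, dC Q ⊆ dC Qt) ∧
  ∀ Q ∈ T, ∀ Q' : ℤ × (Fin m → ℤ), dC Q ⊆ dC Q' → dC Q' ⊆ dC Qt → Q' ∈ T

/-- The Gaussian `g(x) = e^{−π|x|²}` on `ℝ^{2m}`. -/
def gss {m : ℕ} (x : Idx m → ℝ) : ℝ := Real.exp (-Real.pi * ∑ k, (x k) ^ 2)

/-- The mixed partial derivative `∂^0_i ∂^1_i g`. -/
def ddg {m : ℕ} (i : Fin m) (x : Idx m → ℝ) : ℝ :=
  fderiv ℝ (fun y : Idx m → ℝ => fderiv ℝ gss y (Pi.single (Sum.inl i) (1:ℝ))) x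
    (Pi.single (Sum.inr i) (1:ℝ))

/-- Isotropic `L¹` dilation on `ℝ^{2m}`: `φ_t(x) = t^{-2m} φ(t⁻¹ x)`. -/
def dil {m : ℕ} (t : ℝ) (φ : (Idx m → ℝ) → ℝ) (x : Idx m → ℝ) : ℝ :=
  (t ^ (2*m))⁻¹ * φ (t⁻¹ • x)

/-- Matrix dilation: `φ_D(x) = (det D)⁻¹ φ(D⁻¹ x)`. -/
def dilM {m : ℕ} (D : Matrix (Idx m) (Idx m) ℝ) (φ : (Idx m → ℝ) → ℝ) (x : Idx m → ℝ) : ℝ :=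
  (D.det)⁻¹ * φ (D⁻¹.mulVec x)

/-- The region `Ω_𝒯 = ∪_{Q∈𝒯} Q × (ℓ(Q)/2, ℓ(Q))` in the upper half space. -/
def Omega {m : ℕ} (T : Set (ℤ × (Fin m → ℤ))) : Set ((Fin m → ℝ) × ℝ) :=
  ⋃ Q ∈ T, (dC Q) ×ˢ Set.Ioo ((2:ℝ)^Q.1 / 2) ((2:ℝ)^Q.1)

/-- The localized form `Λ_𝒯((F_j)_j)`. -/
def LambdaT {m : ℕ} (J : Matrix (Idx m) (Fin m) ℝ) (T : Set (ℤ × (Fin m → ℤ)))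
    (c : ℝ → ℂ) (u : Idx m → ℝ) (i : Fin m) (F : Corner m → (Fin m → ℝ) → ℝ) : ℂ :=
  ∫ z in Omega T, c z.2 * Complex.ofReal ((1 + en u ^ (4*m))⁻¹ * (z.2)⁻¹ *
    ∫ x : Idx m → ℝ, (∏ j, F j (proj j x)) * dil z.2 (ddg i) (x - J.mulVec z.1 + z.2 • u))

/-- `T_k := ∪ {Q ∈ 𝒯 : ℓ(Q) = 2^k}`. -/
def Tkset {m : ℕ} (T : Set (ℤ × (Fin m → ℤ))) (k : ℤ) : Set (Fin m → ℝ) :=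
  ⋃ Q ∈ {q ∈ T | q.1 = k}, dC Q

/-- The form `Λ̃_𝒯((F_j)_j)` with localization in the `x` variables. -/
def LambdaTilde {m : ℕ} (J : Matrix (Idx m) (Fin m) ℝ) (T : Set (ℤ × (Fin m → ℤ)))
    (c : ℝ → ℂ) (u : Idx m → ℝ) (i : Fin m) (F : Corner m → (Fin m → ℝ) → ℝ) : ℂ :=
  ∑' k : ℤ, ∫ t in Set.Ioc ((2:ℝ)^(k-1)) ((2:ℝ)^k),
    c t * Complex.ofReal ((1 + en u ^ (4*m))⁻¹ * t⁻¹ *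
      ∫ p : Fin m → ℝ, ∫ x : Idx m → ℝ,
        (∏ j, Set.indicator ((Amat J j).mulVec '' Tkset T k) (F j) (proj j x)) *
          dil t (ddg i) (x - J.mulVec p + t • u))

/-- The form `Λ(𝒯,J,K)((F_j)_j)` from the induction proposition. -/
def LambdaK {m : ℕ} (J : Matrix (Idx m) (Fin m) ℝ) (T : Set (ℤ × (Fin m → ℤ)))
    (K : ℝ → (Idx m → ℝ) → ℂ) (F : Corner m → (Fin m → ℝ) → ℝ) : ℂ :=
  ∑' k : ℤ, ∫ x : Idx m → ℝ,
    Complex.ofReal (∏ j, Set.indicator ((Amat J j).mulVec '' Tkset T k) (F j) (proj j x)) *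
      ∫ t in Set.Ioc ((2:ℝ)^(k-1)) ((2:ℝ)^k), K t x * (t : ℂ)⁻¹

/-- The reflected corner `i∗j`, differing from `j` exactly at position `i`. -/
def istar {m : ℕ} (i : Fin m) (j : Corner m) : Corner m :=
  fun k => if k = i then 1 - j i else j k

/-- The diagonal matrix `Θ̃` with entry 0 at positions `i ≤ l` and 1 at positions `i > l`
(1-based), i.e. 0 for `i < l` and 1 otherwise in 0-based indexing. -/
def Th {m : ℕ} (l : ℕ) : Matrix (Fin m) (Fin m) ℝ :=
  Matrix.diagonal fun i => if (i : ℕ) < l then 0 else 1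

/-- The block diagonal matrix `Θ = diag(Θ̃, Θ̃)`. -/
def ThB {m : ℕ} (l : ℕ) : Matrix (Idx m) (Idx m) ℝ :=
  Matrix.diagonal (Sum.elim (fun i : Fin m => if (i:ℕ) < l then (0:ℝ) else 1)
    (fun i : Fin m => if (i:ℕ) < l then (0:ℝ) else 1))

end SBL

namespace SBL

open scoped FourierTransform ContDiff
open Filter Topology

/-- The Riesz-type multiplier `η ↦ η_i / |η|`. -/
def riesz {m : ℕ} (i : Fin m) (η : Fin m → ℝ) : ℂ := ((η i / en η : ℝ) : ℂ)

lemma sum_sq_pos {m : ℕ} {η : Fin m → ℝ} (hη : η ≠ 0) : 0 < ∑ i, (η i) ^ 2 := by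
  obtain ⟨i, hi⟩ := Function.ne_iff.mp hη
  exact Finset.sum_pos' (fun _ _ => sq_nonneg _)
    ⟨i, Finset.mem_univ _, sq_pos_of_ne_zero hi⟩

lemma en_pos {m : ℕ} {η : Fin m → ℝ} (hη : η ≠ 0) : 0 < en η :=
  Real.sqrt_pos.mpr (sum_sq_pos hη)

lemma en_smul {m : ℕ} {t : ℝ} (ht : 0 ≤ t) (η : Fin m → ℝ) : en (t • η) = t * en η := by
  simp only [en, Pi.smul_apply, smul_eq_mul, mul_pow, ← Finset.mul_sum]
  rw [Real.sqrt_mul (sq_nonneg t), Real.sqrt_sq ht]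

lemma continuous_en {m : ℕ} : Continuous (en : (Fin m → ℝ) → ℝ) := by
  unfold en
  fun_prop

lemma abs_le_en {m : ℕ} (i : Fin m) (η : Fin m → ℝ) : |η i| ≤ en η := by
  rw [← Real.sqrt_sq_eq_abs]
  exact Real.sqrt_le_sqrt
    (Finset.single_le_sum (f := fun i => (η i) ^ 2) (fun _ _ => sq_nonneg _) (Finset.mem_univ i))

lemma contDiffOn_riesz {m : ℕ} (i : Fin m) (n : ℕ) : ContDiffOn ℝ n (riesz i) {0}ᶜ := by
  intro η hη
  refine ContDiffAt.contDiffWithinAt ?_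
  refine Complex.ofRealCLM.contDiff.contDiffAt.comp η ?_
  refine ContDiffAt.div (by fun_prop) ?_ (en_pos hη).ne'
  exact ContDiffAt.sqrt (by fun_prop) (sum_sq_pos hη).ne'

lemma isCompact_en_sphere {m : ℕ} : IsCompact {η : Fin m → ℝ | en η = 1} := by
  refine Metric.isCompact_of_isClosed_isBounded
    (isClosed_eq continuous_en continuous_const) ?_
  refine (Metric.isBounded_closedBall (x := (0 : Fin m → ℝ)) (r := 1)).subset fun η hη => ?_
  rw [mem_closedBall_zero_iff, pi_norm_le_iff_of_nonneg zero_le_one]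
  intro i
  exact (abs_le_en i η).trans (le_of_eq hη)

lemma norm_iteratedFDerivWithin_riesz_smul {m : ℕ} (i : Fin m) (k : ℕ) {t : ℝ} (ht : 0 < t)
    {η : Fin m → ℝ} (hη : η ≠ 0) :
    ‖iteratedFDerivWithin ℝ k (riesz i) {0}ᶜ η‖ ≤
      t ^ k * ‖iteratedFDerivWithin ℝ k (riesz i) {0}ᶜ (t • η)‖ := by
  let g : (Fin m → ℝ) ≃L[ℝ] (Fin m → ℝ) := ContinuousLinearEquiv.smulLeft (Units.mk0 t ht.ne')
  have hg : ∀ x, g x = t • x := fun x => rfl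
  have hpre : g ⁻¹' ({0}ᶜ : Set (Fin m → ℝ)) = {0}ᶜ := by
    ext x
    simp
  have hcomp : riesz i ∘ g = riesz i := by
    funext x
    simp only [Function.comp, hg, riesz, en_smul ht.le, Pi.smul_apply, smul_eq_mul]
    rw [mul_div_mul_left _ _ ht.ne']
  have h := g.iteratedFDerivWithin_comp_right (riesz i)
    (s := ({0}ᶜ : Set (Fin m → ℝ))) isOpen_compl_singleton.uniqueDiffOn
    (x := η) (by simpa [hg, ht.ne'] using hη) k
  rw [hpre, hcomp, hg] at h
  rw [h]
  refine ContinuousMultilinearMap.opNorm_le_bound (by positivity) fun v => ?_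
  rw [ContinuousMultilinearMap.compContinuousLinearMap_apply]
  refine (ContinuousMultilinearMap.le_opNorm _ _).trans (le_of_eq ?_)
  simp only [ContinuousLinearEquiv.coe_coe, hg, norm_smul, Finset.prod_mul_distrib,
    Finset.prod_const, Finset.card_univ, Fintype.card_fin, Real.norm_of_nonneg ht.le]
  ring

lemma exists_isCZ_riesz {m : ℕ} (i : Fin m) (n : ℕ) :
    ∃ c : ℝ, 0 < c ∧ IsCZ n (fun η => (c : ℂ) * riesz i η) := by
  have hb : ∀ k ∈ Finset.range (n + 1), ∃ B : ℝ, 0 ≤ B ∧ ∀ η : Fin m → ℝ, en η = 1 →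
      ‖iteratedFDerivWithin ℝ k (riesz i) {0}ᶜ η‖ ≤ B := by
    intro k _
    have hcont : ContinuousOn (iteratedFDerivWithin ℝ k (riesz i) {0}ᶜ) {0}ᶜ :=
      (contDiffOn_riesz i k).continuousOn_iteratedFDerivWithin le_rfl
        isOpen_compl_singleton.uniqueDiffOn
    have hsub : {η : Fin m → ℝ | en η = 1} ⊆ {0}ᶜ := by
      rintro η hη rfl
      simp [en] at hη
    obtain ⟨B, hB⟩ := isCompact_en_sphere.exists_bound_of_continuousOn (hcont.mono hsub)
    exact ⟨|B|, abs_nonneg _, fun η hη => (hB η hη).trans (le_abs_self _)⟩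
  choose! B hB0 hB using hb
  have hS0 : 0 ≤ ∑ k ∈ Finset.range (n + 1), B k := Finset.sum_nonneg hB0
  refine ⟨(1 + ∑ k ∈ Finset.range (n + 1), B k)⁻¹, by positivity, ?_, ?_⟩
  · exact contDiffOn_const.mul (contDiffOn_riesz i n)
  intro k hk η hη
  have hk' : k ∈ Finset.range (n + 1) := Finset.mem_range.mpr (by omega)
  have hle : B k ≤ ∑ k ∈ Finset.range (n + 1), B k := Finset.single_le_sum hB0 hk'
  set S := ∑ k ∈ Finset.range (n + 1), B k
  have e := en_pos hη
  have hsm : (fun η => (((1 + S)⁻¹ : ℝ) : ℂ) * riesz i η) = (1 + S)⁻¹ • riesz i := by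
    funext x
    simp
  rw [hsm, iteratedFDerivWithin_const_smul_apply
    (((contDiffOn_riesz i n).of_le (by exact_mod_cast hk)).contDiffWithinAt hη)
    isOpen_compl_singleton.uniqueDiffOn hη, norm_smul, Real.norm_of_nonneg (by positivity),
    Real.rpow_neg e.le, Real.rpow_natCast]
  have h1 := norm_iteratedFDerivWithin_riesz_smul i k (inv_pos.mpr e) hη
  have h2 := hB k hk' ((en η)⁻¹ • η) (by rw [en_smul (by positivity)]; field_simp)
  calc (1 + S)⁻¹ * ‖iteratedFDerivWithin ℝ k (riesz i) {0}ᶜ η‖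
      ≤ (1 + S)⁻¹ * ((en η)⁻¹ ^ k * (1 + S)) := by
        gcongr
        exact h1.trans (by gcongr; linarith)
    _ = (en η ^ k)⁻¹ := by
        have : 1 + S ≠ 0 := by positivity
        rw [inv_pow]
        field_simp

/-- The Fourier transform of a real-valued function on the line. -/
def ft (f : ℝ → ℝ) : ℝ → ℂ := 𝓕 fun x => (f x : ℂ)

lemma ft_eq_integral (f : ℝ → ℝ) (ξ : ℝ) :
    ft f ξ = ∫ x : ℝ, Complex.exp (-2 * Real.pi * Complex.I * (x * ξ)) * (f x : ℂ) := by
  rw [ft, Real.fourier_real_eq_integral_exp_smul]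
  refine integral_congr_ae (ae_of_all _ fun x => ?_)
  simp only [smul_eq_mul]
  congr 2
  push_cast
  ring

lemma exists_schwartz_ofReal {f : ℝ → ℝ} (hf : ContDiff ℝ ∞ f) (hc : HasCompactSupport f) :
    ∃ g : SchwartzMap ℝ ℂ, ∀ x, g x = (f x : ℂ) := by
  have h1 : HasCompactSupport fun x => (f x : ℂ) := hc.comp_left (g := Complex.ofReal) rfl
  have h2 : ContDiff ℝ ∞ fun x => (f x : ℂ) := Complex.ofRealCLM.contDiff.comp hf
  exact ⟨h1.toSchwartzMap h2, fun x => rfl⟩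

lemma exists_schwartz_ft {f : ℝ → ℝ} (hf : ContDiff ℝ ∞ f) (hc : HasCompactSupport f) :
    ∃ g : SchwartzMap ℝ ℂ, ⇑g = ft f := by
  obtain ⟨g, hg⟩ := exists_schwartz_ofReal hf hc
  refine ⟨𝓕 g, ?_⟩
  rw [SchwartzMap.fourier_coe, ft, show ⇑g = fun x => (f x : ℂ) from funext hg]

lemma integrable_ft {f : ℝ → ℝ} (hf : ContDiff ℝ ∞ f) (hc : HasCompactSupport f) :
    Integrable (ft f) := by
  obtain ⟨g, hg⟩ := exists_schwartz_ft hf hc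
  exact hg ▸ g.integrable

lemma continuous_ft {f : ℝ → ℝ} (hf : ContDiff ℝ ∞ f) (hc : HasCompactSupport f) :
    Continuous (ft f) := by
  obtain ⟨g, hg⟩ := exists_schwartz_ft hf hc
  exact hg ▸ g.continuous

lemma integrable_ofReal_test {f : ℝ → ℝ} (hf : ContDiff ℝ ∞ f) (hc : HasCompactSupport f) :
    Integrable fun x => (f x : ℂ) :=
  (hf.continuous.integrable_of_hasCompactSupport hc).ofReal

lemma ft_comp_add_right (f : ℝ → ℝ) (a ξ : ℝ) :
    ft (fun y => f (y + a)) ξ = Complex.exp (2 * Real.pi * Complex.I * (a * ξ)) * ft f ξ := by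
  rw [ft_eq_integral, ft_eq_integral, ← integral_const_mul,
    ← integral_add_right_eq_self
      (fun x : ℝ => Complex.exp (2 * Real.pi * Complex.I * (a * ξ)) *
        (Complex.exp (-2 * Real.pi * Complex.I * (x * ξ)) * (f x : ℂ))) a]
  refine integral_congr_ae (ae_of_all _ fun x => ?_)
  simp only
  rw [← mul_assoc (Complex.exp _) (Complex.exp _), ← Complex.exp_add]
  congr 2
  push_cast
  ring

lemma ft_neg (f : ℝ → ℝ) (ξ : ℝ) : ft f (-ξ) = (starRingEnd ℂ) (ft f ξ) := by
  rw [ft_eq_integral, ft_eq_integral, ← integral_conj]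
  refine integral_congr_ae (ae_of_all _ fun x => ?_)
  simp only [map_mul, Complex.conj_ofReal, ← Complex.exp_conj]
  congr 2
  simp [Complex.conj_ofNat]

lemma integral_ft_neg_mul_ft {f : ℝ → ℝ} (hf : ContDiff ℝ ∞ f) (hc : HasCompactSupport f) :
    ∫ ξ, ft f (-ξ) * ft f ξ = ((∫ x, f x ^ 2 : ℝ) : ℂ) := by
  obtain ⟨g, hg⟩ := exists_schwartz_ofReal hf hc
  have h := SchwartzMap.integral_norm_sq_fourier g
  have hF : ∀ ξ, (𝓕 g) ξ = ft f ξ := fun ξ => by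
    rw [SchwartzMap.fourier_coe, ft, show ⇑g = fun x => (f x : ℂ) from funext hg]
  simp only [hF, hg, Complex.norm_real, Real.norm_eq_abs, sq_abs] at h
  rw [← h, ← integral_complex_ofReal]
  refine integral_congr_ae (ae_of_all _ fun x => ?_)
  simp only
  rw [ft_neg, Complex.conj_mul']
  push_cast
  rfl

lemma contDiff_div_of_eq_zero {f : ℝ → ℝ} (hf : ContDiff ℝ ∞ f) (h0 : ∀ y < 1, f y = 0) :
    ContDiff ℝ ∞ fun y => f y / y := by
  refine contDiff_iff_contDiffAt.mpr fun y => ?_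
  rcases lt_or_ge y 1 with hy | hy
  · refine (contDiffAt_const (c := (0 : ℝ))).congr_of_eventuallyEq ?_
    filter_upwards [eventually_lt_nhds hy] with z hz
    rw [h0 z hz, zero_div]
  · exact hf.contDiffAt.div contDiffAt_id (by simp; linarith)

lemma measurable_sign_complex : Measurable fun η : ℝ => ((SignType.sign η : ℝ) : ℂ) := by
  have h : (fun η : ℝ => ((SignType.sign η : ℝ) : ℂ)) =
      fun η => if η < 0 then -1 else if η = 0 then 0 else 1 := by
    funext η
    rcases lt_trichotomy η 0 with h | h | h
    · simp [h]
    · simp [h]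
    · simp [h, h.ne', not_lt.mpr h.le]
  rw [h]
  exact Measurable.ite measurableSet_Iio measurable_const
    (Measurable.ite (measurableSet_singleton 0) measurable_const measurable_const)

lemma integrable_ft_mul_sign {f : ℝ → ℝ} (hf : ContDiff ℝ ∞ f) (hc : HasCompactSupport f) :
    Integrable fun η => ft f η * (SignType.sign η : ℝ) := by
  refine (integrable_ft hf hc).mul_bdd measurable_sign_complex.aestronglyMeasurable (c := 1)
    (ae_of_all _ fun η => ?_)
  rcases lt_trichotomy η 0 with h | h | h <;> simp [h]

/-- The Hilbert transform at the origin of a function supported away from it. -/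
lemma integral_ft_mul_sign_zero {f : ℝ → ℝ} (hf : ContDiff ℝ ∞ f) (hc : HasCompactSupport f)
    (h0 : ∀ y < 1, f y = 0) :
    ∫ η, ft f η * (SignType.sign η : ℝ) =
      -(Complex.I / Real.pi) * ((∫ y, f y / y : ℝ) : ℂ) := by
  set h : ℝ → ℝ := fun y => f y / y with hh
  have hhs : ContDiff ℝ ∞ h := contDiff_div_of_eq_zero hf h0
  have hhc : HasCompactSupport h := by
    have : h = fun y => f y * y⁻¹ := rfl
    rw [this]
    exact hc.mul_right
  have hmul : ∀ y, y * h y = f y := fun y => by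
    rcases eq_or_ne y 0 with rfl | hy
    · simp [h0 0 one_pos]
    · simp only [hh]; field_simp
  have hpi : (-2 * Real.pi * Complex.I : ℂ) ≠ 0 := by
    simp [Real.pi_ne_zero, Complex.I_ne_zero]
  have hder : ∀ η, HasDerivAt (ft h) ((-2 * Real.pi * Complex.I) * ft f η) η := fun η => by
    have := Real.hasDerivAt_fourier (f := fun x => (h x : ℂ)) (integrable_ofReal_test hhs hhc)
      (by
        refine (integrable_ofReal_test hf hc).congr (ae_of_all _ fun x => ?_)
        simp only [Complex.real_smul]
        rw [← Complex.ofReal_mul, hmul]) η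
    refine this.congr_deriv ?_
    rw [ft_eq_integral, Real.fourier_real_eq_integral_exp_smul, ← integral_const_mul]
    refine integral_congr_ae (ae_of_all _ fun x => ?_)
    simp only [smul_eq_mul]
    rw [← hmul x]
    push_cast
    ring_nf
  have hlim := Real.zero_at_infty_fourier (fun x => (h x : ℂ))
  have htop : Tendsto (ft h) atTop (𝓝 0) := hlim.mono_left atTop_le_cocompact
  have hbot : Tendsto (ft h) atBot (𝓝 0) := hlim.mono_left atBot_le_cocompact
  have hfi := integrable_ft hf hc
  have hint := hfi.const_mul (-2 * Real.pi * Complex.I)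
  have e1 := integral_Ioi_of_hasDerivAt_of_tendsto' (a := 0) (fun x _ => hder x)
    hint.integrableOn htop
  have e2 := integral_Iic_of_hasDerivAt_of_tendsto' (a := 0) (fun x _ => hder x)
    hint.integrableOn hbot
  rw [integral_const_mul] at e1 e2
  have hsi := integrable_ft_mul_sign hf hc
  have hsplit := integral_add_compl (measurableSet_Iic (a := (0 : ℝ))) hsi
  rw [Set.compl_Iic] at hsplit
  have g1 : ∫ η in Set.Ioi (0 : ℝ), ft f η * (SignType.sign η : ℝ) =
      ∫ η in Set.Ioi (0 : ℝ), ft f η :=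
    setIntegral_congr_fun measurableSet_Ioi fun η hη => by simp [sign_pos (Set.mem_Ioi.mp hη)]
  have g2 : ∫ η in Set.Iic (0 : ℝ), ft f η * (SignType.sign η : ℝ) =
      -∫ η in Set.Iic (0 : ℝ), ft f η := by
    rw [integral_Iic_eq_integral_Iio, integral_Iic_eq_integral_Iio, ← integral_neg]
    exact setIntegral_congr_fun measurableSet_Iio fun η hη => by
      simp [sign_neg (Set.mem_Iio.mp hη)]
  have hz : ft h 0 = ((∫ y, f y / y : ℝ) : ℂ) := by
    rw [ft_eq_integral, ← integral_complex_ofReal]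
    simp [hh]
  rw [← hsplit, g1, g2, ← hz]
  have hpi' : (Real.pi : ℂ) ≠ 0 := by simp [Real.pi_ne_zero]
  apply mul_left_cancel₀ hpi
  rw [mul_add, mul_neg, e1, e2]
  field_simp
  rw [Complex.I_sq]
  ring

lemma integral_exp_mul_ft_mul_sign {f : ℝ → ℝ} (hf : ContDiff ℝ ∞ f) (hc : HasCompactSupport f)
    (h0 : ∀ y < 2, f y = 0) {x : ℝ} (hx : x ≤ 1) :
    ∫ η : ℝ, Complex.exp (2 * Real.pi * Complex.I * (x * η)) * ft f η * (SignType.sign η : ℝ) =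
      -(Complex.I / Real.pi) * ((∫ y, f y / (y - x) : ℝ) : ℂ) := by
  have h1 : ContDiff ℝ ∞ fun y => f (y + x) := hf.comp (by fun_prop)
  have h2 : HasCompactSupport fun y => f (y + x) :=
    hc.comp_homeomorph (Homeomorph.addRight x)
  have h := integral_ft_mul_sign_zero h1 h2 fun y hy => h0 _ (by linarith)
  simp only [ft_comp_add_right] at h
  rw [h, ← integral_add_right_eq_self (fun y => f y / (y - x)) x]
  simp

/-- The bilinear form of the Hilbert transform, for functions with separated supports. -/
lemma integral_ft_neg_mul_ft_mul_sign {f g : ℝ → ℝ} (hf : ContDiff ℝ ∞ f)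
    (hfc : HasCompactSupport f) (hf0 : ∀ x, 1 < |x| → f x = 0) (hg : ContDiff ℝ ∞ g)
    (hgc : HasCompactSupport g) (hg0 : ∀ y < 2, g y = 0) :
    ∫ η : ℝ, ft f (-η) * ft g η * (SignType.sign η : ℝ) =
      -(Complex.I / Real.pi) * ((∫ x, f x * ∫ y, g y / (y - x) : ℝ) : ℂ) := by
  let k : ℝ → ℝ → ℂ := fun η x => Complex.exp (2 * Real.pi * Complex.I * (x * η)) *
    ((ft g η * (SignType.sign η : ℝ)) * (f x : ℂ))
  have hk : Integrable (Function.uncurry k) (volume.prod volume) := by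
    refine ((integrable_ft_mul_sign hg hgc).mul_prod (integrable_ofReal_test hf hfc)).bdd_mul
      (c := 1) ?_ (ae_of_all _ fun z => ?_)
    · exact Continuous.aestronglyMeasurable (by fun_prop)
    · rw [show (2 * Real.pi * Complex.I * (z.2 * z.1) : ℂ) =
        ((2 * Real.pi * (z.2 * z.1) : ℝ) : ℂ) * Complex.I by push_cast; ring,
        Complex.norm_exp_ofReal_mul_I]
  calc ∫ η : ℝ, ft f (-η) * ft g η * (SignType.sign η : ℝ)
      = ∫ η, ∫ x, k η x := by
        refine integral_congr_ae (ae_of_all _ fun η => ?_)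
        simp only [k]
        rw [ft_eq_integral, mul_assoc, ← integral_mul_const]
        refine integral_congr_ae (ae_of_all _ fun x => ?_)
        simp only
        rw [show (-2 * Real.pi * Complex.I * (x * (-η : ℝ)) : ℂ) =
          2 * Real.pi * Complex.I * (x * η) by push_cast; ring]
        ring
    _ = ∫ x, ∫ η, k η x := integral_integral_swap hk
    _ = _ := by
        rw [← integral_complex_ofReal, ← integral_const_mul]
        refine integral_congr_ae (ae_of_all _ fun x => ?_)
        simp only
        rcases lt_or_ge 1 |x| with hx | hx
        · simp [k, hf0 x hx]
        · have h := integral_exp_mul_ft_mul_sign hg hgc hg0 (abs_le.mp hx).2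
          rw [Complex.ofReal_mul, mul_left_comm, ← h, ← integral_const_mul]
          refine integral_congr_ae (ae_of_all _ fun η => ?_)
          simp only [k]
          ring

lemma log_le_integral_div_sub {g : ℝ → ℝ} (hg : Continuous g) (hgc : HasCompactSupport g)
    (hg0 : ∀ y < 2, g y = 0) (hgn : ∀ y, 0 ≤ g y) {T : ℝ} (hT : 3 ≤ T)
    (hg1 : ∀ y ∈ Set.Icc 3 T, g y = 1) {x : ℝ} (hx : |x| ≤ 1) :
    Real.log ((T + 1) / 4) ≤ ∫ y, g y / (y - x) := by
  obtain ⟨hx1, hx2⟩ := abs_le.mp hx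
  have hint : Integrable fun y => g y / (y - x) := by
    have hcont : Continuous fun y => g y / max (y - x) 1 :=
      hg.div (by fun_prop) fun y => (lt_of_lt_of_le one_pos (le_max_right _ _)).ne'
    refine (hcont.integrable_of_hasCompactSupport ?_).congr (ae_of_all _ fun y => ?_)
    · simp only [div_eq_mul_inv]
      exact hgc.mul_right
    · rcases lt_or_ge y 2 with hy | hy
      · simp [hg0 y hy]
      · simp only
        rw [max_eq_left (by linarith)]
  have hnn : ∀ y, 0 ≤ g y / (y - x) := fun y => by
    rcases lt_or_ge y 2 with hy | hy
    · simp [hg0 y hy]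
    · exact div_nonneg (hgn y) (by linarith)
  have hI : ∫ y in (3 : ℝ)..T, (y + 1)⁻¹ = Real.log ((T + 1) / 4) := by
    rw [intervalIntegral.integral_comp_add_right (fun y => y⁻¹) 1,
      integral_inv_of_pos (by norm_num) (by linarith)]
    norm_num
  rw [← hI, intervalIntegral.integral_of_le hT]
  refine le_trans ?_ (setIntegral_le_integral (s := Set.Ioc 3 T) hint (ae_of_all _ hnn))
  refine setIntegral_mono_on ?_ hint.integrableOn measurableSet_Ioc fun y hy => ?_
  · refine (ContinuousOn.integrableOn_Icc ?_).mono_set Set.Ioc_subset_Icc_self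
    exact ContinuousOn.inv₀ (by fun_prop) fun y hy => by linarith [hy.1]
  · rw [hg1 y ⟨hy.1.le, hy.2⟩, inv_eq_one_div]
    exact one_div_le_one_div_of_le (by linarith [hy.1]) (by linarith)

lemma log_le_norm_integral_ft_neg_mul_ft_mul_sign {f g : ℝ → ℝ} (hf : ContDiff ℝ ∞ f)
    (hfc : HasCompactSupport f) (hf0 : ∀ x, 1 < |x| → f x = 0) (hfn : ∀ x, 0 ≤ f x)
    (hg : ContDiff ℝ ∞ g)
    (hgc : HasCompactSupport g) (hg0 : ∀ y < 2, g y = 0) (hgn : ∀ y, 0 ≤ g y)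
    {T : ℝ} (hT : 3 ≤ T) (hg1 : ∀ y ∈ Set.Icc 3 T, g y = 1) :
    Real.pi⁻¹ * ((∫ x, f x) * Real.log ((T + 1) / 4)) ≤
      ‖∫ η : ℝ, ft f (-η) * ft g η * (SignType.sign η : ℝ)‖ := by
  have hmeas : AEStronglyMeasurable fun x => ∫ y, g y / (y - x) := by
    have : Measurable fun z : ℝ × ℝ => g z.2 / (z.2 - z.1) :=
      (hg.continuous.measurable.comp measurable_snd).div (measurable_snd.sub measurable_fst)
    exact (this.stronglyMeasurable.integral_prod_right (ν := volume)).aestronglyMeasurable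
  have hgi := hg.continuous.integrable_of_hasCompactSupport (μ := volume) hgc
  have hfi := hf.continuous.integrable_of_hasCompactSupport (μ := volume) hfc
  have hint : Integrable fun x => f x * ∫ y, g y / (y - x) := by
    refine (hfi.mul_const (∫ y, g y)).mono (hfi.aestronglyMeasurable.mul hmeas)
      (ae_of_all _ fun x => ?_)
    rcases lt_or_ge 1 |x| with hx | hx
    · simp [hf0 x hx]
    · rw [norm_mul, norm_mul]
      refine mul_le_mul_of_nonneg_left ?_ (norm_nonneg _)
      rw [Real.norm_of_nonneg (integral_nonneg hgn)]
      refine norm_integral_le_of_norm_le hgi (ae_of_all _ fun y => ?_)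
      rcases lt_or_ge y 2 with hy | hy
      · simp [hg0 y hy]
      · rw [norm_div, Real.norm_of_nonneg (hgn y)]
        refine div_le_self (hgn y) (le_trans ?_ (le_abs_self _))
        linarith [(abs_le.mp hx).2]
  have hle : (∫ x, f x) * Real.log ((T + 1) / 4) ≤ ∫ x, f x * ∫ y, g y / (y - x) := by
    rw [← integral_mul_const]
    refine integral_mono (hfi.mul_const _) hint fun x => ?_
    rcases lt_or_ge 1 |x| with hx | hx
    · simp [hf0 x hx]
    · exact mul_le_mul_of_nonneg_left
        (log_le_integral_div_sub hg.continuous hgc hg0 hgn hT hg1 hx) (hfn x)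
  rw [integral_ft_neg_mul_ft_mul_sign hf hfc hf0 hg hgc hg0, norm_mul, norm_neg, norm_div,
    Complex.norm_I, Complex.norm_real, Complex.norm_real, Real.norm_of_nonneg Real.pi_pos.le,
    one_div]
  exact mul_le_mul_of_nonneg_left (hle.trans (le_abs_self _)) (inv_nonneg.mpr Real.pi_pos.le)

lemma fourierT_prod {m : ℕ} (h : Idx m → ℝ → ℝ) (ξ : Idx m → ℝ) :
    fourierT (fun x => ∏ k, h k (x k)) ξ = ∏ k, ft (h k) (ξ k) := by
  simp only [ft_eq_integral]
  rw [← integral_fintype_prod_volume_eq_prod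
    (fun k (t : ℝ) => Complex.exp (-2 * Real.pi * Complex.I * (t * ξ k)) * (h k t : ℂ))]
  refine integral_congr_ae (ae_of_all _ fun x => ?_)
  simp only [Finset.prod_mul_distrib, ← Complex.exp_sum, ← Finset.mul_sum]
  push_cast
  rfl

lemma ft_comp_div (f : ℝ → ℝ) {a : ℝ} (ha : 0 < a) (ξ : ℝ) :
    ft (fun x => f (x / a)) ξ = a * ft f (a * ξ) := by
  rw [ft_eq_integral, ft_eq_integral]
  have h := Measure.integral_comp_div
    (fun x : ℝ => Complex.exp (-2 * Real.pi * Complex.I * (x * (a * ξ : ℝ))) * (f x : ℂ)) a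
  rw [abs_of_pos ha, Complex.real_smul] at h
  rw [← h]
  refine integral_congr_ae (ae_of_all _ fun x => ?_)
  simp only
  congr 3
  have : (a : ℂ) ≠ 0 := by exact_mod_cast ha.ne'
  push_cast
  field_simp

/-- The matrix `(I, -I)`. -/
def diffM (m : ℕ) : Matrix (Fin m) (Idx m) ℝ := Matrix.fromCols 1 (-1)

lemma pv_diffM_of_prod {m : ℕ} (K : (Fin m → ℝ) → ℂ) (F : Corner m → (Fin m → ℝ) → ℝ)
    (f g : Fin m → ℝ → ℝ) (hF : ∀ x : Idx m → ℝ,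
      ∏ j, F j (proj j x) = ∏ i, f i (x (Sum.inl i)) * g i (x (Sum.inr i))) :
    pv (diffM m) K F = ∫ η : Fin m → ℝ, (∏ i, ft (f i) (-η i) * ft (g i) (η i)) * K η := by
  refine integral_congr_ae (ae_of_all _ fun η => ?_)
  have h : (fun x : Idx m → ℝ => ∏ j, F j (proj j x)) =
      fun x => ∏ k, (Sum.elim f g : Idx m → ℝ → ℝ) k (x k) := by
    funext x
    rw [hF, Fintype.prod_sum_type, Finset.prod_mul_distrib]
    rfl
  simp only
  rw [h, fourierT_prod, Fintype.prod_sum_type, ← Finset.prod_mul_distrib]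
  simp [diffM, Matrix.transpose_fromCols, Matrix.fromRows_mulVec, Matrix.neg_mulVec]

/-- Change of variables for a diagonal dilation. -/
lemma integral_comp_pi_mul {m : ℕ} {a : Fin m → ℝ} (ha : ∀ i, 0 < a i)
    (Φ : (Fin m → ℝ) → ℂ) :
    ∫ η, Φ η = ((∏ i, a i : ℝ) : ℂ) * ∫ η : Fin m → ℝ, Φ fun i => a i * η i := by
  have hdet : (Matrix.diagonal a).det = ∏ i, a i := Matrix.det_diagonal
  have hpos : 0 < ∏ i, a i := Finset.prod_pos fun i _ => ha i
  have h := Real.smul_map_diagonal_volume_pi (D := a) (by rw [hdet]; exact hpos.ne')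
  conv_lhs => rw [← h]
  have hemb : MeasurableEmbedding (Matrix.toLin' (Matrix.diagonal a)) := by
    refine (LinearMap.continuous_of_finiteDimensional _).measurableEmbedding ?_
    intro x y hxy
    funext i
    have := congrFun hxy i
    simpa [Matrix.toLin'_apply, Matrix.mulVec_diagonal, (ha i).ne'] using this
  rw [integral_smul_measure, hemb.integral_map, hdet, abs_of_pos hpos,
    ENNReal.toReal_ofReal hpos.le, Complex.real_smul]
  congr 2
  funext η
  congr 1
  funext i
  simp [Matrix.toLin'_apply, Matrix.mulVec_diagonal]

lemma pv_diffM_riesz {m : ℕ} (i₀ : Fin m) (c : ℝ) (F : Corner m → (Fin m → ℝ) → ℝ)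
    (f g : Fin m → ℝ → ℝ) {a : Fin m → ℝ} (ha : ∀ i, 0 < a i) (hF : ∀ x : Idx m → ℝ,
      ∏ j, F j (proj j x) = ∏ i, f i (x (Sum.inl i) / a i) * g i (x (Sum.inr i) / a i)) :
    pv (diffM m) (fun η => c * riesz i₀ η) F = c * ((∏ i, a i : ℝ) : ℂ) *
      ∫ η : Fin m → ℝ, (∏ i, ft (f i) (-η i) * ft (g i) (η i)) *
        riesz i₀ fun i => η i / a i := by
  rw [pv_diffM_of_prod _ F (fun i x => f i (x / a i)) (fun i x => g i (x / a i)) hF,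
    integral_comp_pi_mul ha fun η => (∏ i, ft (f i) (-η i) * ft (g i) (η i)) *
      riesz i₀ fun i => η i / a i, ← integral_const_mul, ← integral_const_mul]
  refine integral_congr_ae (ae_of_all _ fun η => ?_)
  have hdiv : (fun i => a i * η i / a i) = η :=
    funext fun i => mul_div_cancel_left₀ _ (ha i).ne'
  simp only [ft_comp_div _ (ha _), hdiv, Complex.ofReal_prod, mul_neg]
  have : ∀ i, (a i : ℂ) * ft (f i) (-(a i * η i)) * (a i * ft (g i) (a i * η i)) =
      (a i * a i) * (ft (f i) (-(a i * η i)) * ft (g i) (a i * η i)) := fun i => by ring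
  simp only [this, Finset.prod_mul_distrib]
  ring

lemma norm_riesz_le {m : ℕ} (i : Fin m) (η : Fin m → ℝ) : ‖riesz i η‖ ≤ 1 := by
  rw [riesz, Complex.norm_real, norm_div, Real.norm_eq_abs, Real.norm_eq_abs]
  exact div_le_one_of_le₀ ((abs_le_en i η).trans (le_abs_self _)) (abs_nonneg _)

lemma measurable_riesz {m : ℕ} (i : Fin m) : Measurable (riesz i) :=
  Complex.measurable_ofReal.comp ((measurable_pi_apply i).div continuous_en.measurable)

lemma tendsto_riesz_dilate {m : ℕ} (i₀ : Fin m) (η : Fin m → ℝ) :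
    Tendsto (fun M : ℕ => riesz i₀ fun i => η i / if i = i₀ then 1 else (M : ℝ)) atTop
      (𝓝 ((SignType.sign (η i₀) : ℝ) : ℂ)) := by
  rcases eq_or_ne (η i₀) 0 with h0 | h0
  · simp [riesz, h0]
  have hvec : Tendsto (fun (M : ℕ) (i : Fin m) => η i / if i = i₀ then 1 else (M : ℝ)) atTop
      (𝓝 (Pi.single i₀ (η i₀))) := by
    refine tendsto_pi_nhds.mpr fun i => ?_
    rcases eq_or_ne i i₀ with rfl | hi
    · simp
    · simpa [hi] using tendsto_const_div_atTop_nhds_zero_nat (η i)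
  have hen : en (Pi.single i₀ (η i₀) : Fin m → ℝ) = |η i₀| := by
    rw [en, Finset.sum_eq_single i₀ (fun i _ hi => by simp [hi]) (by simp), Pi.single_eq_same,
      Real.sqrt_sq_eq_abs]
  have h := (tendsto_const_nhds (x := η i₀)).div ((continuous_en.tendsto _).comp hvec)
    (by rw [hen]; exact abs_ne_zero.mpr h0)
  have hs : η i₀ / en (Pi.single i₀ (η i₀) : Fin m → ℝ) = (SignType.sign (η i₀) : ℝ) := by
    rw [hen, div_eq_iff (abs_ne_zero.mpr h0), sign_mul_abs]
  rw [hs] at h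
  refine (Complex.continuous_ofReal.tendsto _).comp h |>.congr fun M => ?_
  simp [riesz, Function.comp]

lemma tendsto_integral_prod_mul_riesz {m : ℕ} (i₀ : Fin m) {G : Fin m → ℝ → ℂ}
    (hG : ∀ i, Integrable (G i)) :
    Tendsto (fun M : ℕ => ∫ η : Fin m → ℝ, (∏ i, G i (η i)) *
        riesz i₀ fun i => η i / if i = i₀ then 1 else (M : ℝ)) atTop
      (𝓝 (∏ i, ∫ t, G i t * if i = i₀ then ((SignType.sign t : ℝ) : ℂ) else 1)) := by
  rw [← integral_fintype_prod_volume_eq_prod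
    (fun i (t : ℝ) => G i t * if i = i₀ then ((SignType.sign t : ℝ) : ℂ) else 1)]
  have hint : Integrable fun η : Fin m → ℝ => ∏ i, G i (η i) := Integrable.fintype_prod hG
  refine tendsto_integral_of_dominated_convergence (fun η => ‖∏ i, G i (η i)‖) (fun M => ?_)
    hint.norm (fun M => ae_of_all _ fun η => ?_) (ae_of_all _ fun η => ?_)
  · refine hint.aestronglyMeasurable.mul (Measurable.aestronglyMeasurable ?_)
    exact (measurable_riesz i₀).comp
      (measurable_pi_lambda _ fun i => (measurable_pi_apply i).div_const _)
  · rw [norm_mul]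
    exact mul_le_of_le_one_right (norm_nonneg _) (norm_riesz_le _ _)
  · simp only [Finset.prod_mul_distrib, Finset.prod_ite_eq', Finset.mem_univ, if_true]
    exact (tendsto_riesz_dilate i₀ η).const_mul _

lemma integrable_ft_neg_mul_ft {f g : ℝ → ℝ} (hf : ContDiff ℝ ∞ f) (hfc : HasCompactSupport f)
    (hg : ContDiff ℝ ∞ g) (hgc : HasCompactSupport g) :
    Integrable fun t => ft f (-t) * ft g t := by
  obtain ⟨φ, hφ⟩ := exists_schwartz_ft hf hfc
  refine (integrable_ft hg hgc).bdd_mul (c := SchwartzMap.seminorm ℝ 0 0 φ)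
    ((continuous_ft hf hfc).comp continuous_neg).aestronglyMeasurable
    (ae_of_all _ fun t => ?_)
  rw [← hφ]
  exact SchwartzMap.norm_le_seminorm ℝ φ (-t)

lemma card_filter_corner {m : ℕ} (i : Fin m) (b : Fin 2) :
    (Finset.univ.filter fun j : Corner m => j i = b).card = 2 ^ (m - 1) := by
  have h := Fintype.card_filter_piFinset_const_eq_of_mem (Finset.univ : Finset (Fin 2)) i
    (Finset.mem_univ b)
  simpa [Fintype.piFinset_univ] using h

/-- The tensor product whose `i`-th factor, dilated by `a i`, is `u i` or `v i` according to
the corner `j`. -/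
def cornerFun {m : ℕ} (u v : Fin m → ℝ → ℝ) (a : Fin m → ℝ) (j : Corner m) (x : Fin m → ℝ) : ℝ :=
  ∏ i, (if j i = 0 then u i else v i) (x i / a i)

lemma prod_cornerFun {m : ℕ} (u v : Fin m → ℝ → ℝ) (a : Fin m → ℝ) (x : Idx m → ℝ) :
    ∏ j, cornerFun u v a j (proj j x) =
      ∏ i, u i (x (Sum.inl i) / a i) ^ 2 ^ (m - 1) * v i (x (Sum.inr i) / a i) ^ 2 ^ (m - 1) := by
  simp only [cornerFun]
  rw [Finset.prod_comm]
  refine Finset.prod_congr rfl fun i _ => ?_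
  have h : ∀ j : Corner m, (if j i = 0 then u i else v i) (proj j x i / a i) =
      if j i = 0 then u i (x (Sum.inl i) / a i) else v i (x (Sum.inr i) / a i) := fun j => by
    by_cases hj : j i = 0 <;> simp [proj, sel, hj]
  have h1 : (Finset.univ.filter fun j : Corner m => ¬ j i = 0) =
      Finset.univ.filter fun j : Corner m => j i = 1 :=
    Finset.filter_congr fun j _ => by omega
  simp only [h]
  rw [Finset.prod_ite, Finset.prod_const, Finset.prod_const, h1, card_filter_corner,
    card_filter_corner]

lemma contDiff_cornerFun {m : ℕ} {u v : Fin m → ℝ → ℝ} (hu : ∀ i, ContDiff ℝ ∞ (u i))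
    (hv : ∀ i, ContDiff ℝ ∞ (v i)) (a : Fin m → ℝ) (j : Corner m) :
    ContDiff ℝ ∞ (cornerFun u v a j) := by
  refine contDiff_prod fun i _ => ?_
  have h : ContDiff ℝ ∞ fun x : Fin m → ℝ => x i / a i := by fun_prop
  split_ifs
  exacts [(hu i).comp h, (hv i).comp h]

lemma hasCompactSupport_cornerFun {m : ℕ} {u v : Fin m → ℝ → ℝ}
    (hu : ∀ i, HasCompactSupport (u i)) (hv : ∀ i, HasCompactSupport (v i)) {a : Fin m → ℝ}
    (ha : ∀ i, 0 < a i) (j : Corner m) : HasCompactSupport (cornerFun u v a j) := by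
  have h : ∀ i, HasCompactSupport (if j i = 0 then u i else v i) := fun i => by
    split_ifs
    exacts [hu i, hv i]
  refine HasCompactSupport.intro (isCompact_univ_pi fun i => (h i).image
    (continuous_id.mul (continuous_const (y := a i)))) fun x hx => ?_
  simp only [Set.mem_univ_pi, not_forall] at hx
  obtain ⟨i, hi⟩ := hx
  refine Finset.prod_eq_zero (Finset.mem_univ i) (image_eq_zero_of_notMem_tsupport fun hmem => ?_)
  exact hi ⟨_, hmem, div_mul_cancel₀ _ (ha i).ne'⟩

lemma abs_cornerFun_le_one {m : ℕ} {u v : Fin m → ℝ → ℝ} (hu : ∀ i t, |u i t| ≤ 1)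
    (hv : ∀ i t, |v i t| ≤ 1) (a : Fin m → ℝ) (j : Corner m) (x : Fin m → ℝ) :
    |cornerFun u v a j x| ≤ 1 := by
  rw [cornerFun, Finset.abs_prod]
  refine Finset.prod_le_one (fun _ _ => abs_nonneg _) fun i _ => ?_
  split_ifs
  exacts [hu i _, hv i _]

lemma eLpNorm_top_cornerFun_le {m : ℕ} {u v : Fin m → ℝ → ℝ} (hu : ∀ i t, |u i t| ≤ 1)
    (hv : ∀ i t, |v i t| ≤ 1) (a : Fin m → ℝ) (j : Corner m) :
    eLpNorm (cornerFun u v a j) ⊤ volume ≤ 1 := by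
  rw [eLpNorm_exponent_top]
  simpa using eLpNormEssSup_le_of_ae_bound (μ := volume) (C := 1)
    (ae_of_all _ fun x => abs_cornerFun_le_one hu hv a j x)

lemma eLpNorm_cornerFun_le {m : ℕ} {u v : Fin m → ℝ → ℝ} (hu : ∀ i t, |u i t| ≤ 1)
    (hv : ∀ i t, |v i t| ≤ 1) {a : Fin m → ℝ} (ha : ∀ i, 0 < a i) (j : Corner m)
    (hsupp : ∀ i t, 1 < |t| → (if j i = 0 then u i else v i) t = 0) {p : ℝ≥0∞} (hp0 : p ≠ 0)
    (hp : p ≠ ⊤) :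
    eLpNorm (cornerFun u v a j) p volume ≤
      ENNReal.ofReal (2 ^ m * ∏ i, a i) ^ (1 / p.toReal) := by
  have hvol : volume (Set.Icc (-a) a) = ENNReal.ofReal (2 ^ m * ∏ i, a i) := by
    rw [Real.volume_Icc_pi, ← ENNReal.ofReal_prod_of_nonneg fun i _ => by
      simp only [Pi.neg_apply]; linarith [ha i]]
    congr 1
    simp only [Pi.neg_apply, sub_neg_eq_add, ← two_mul, Finset.prod_mul_distrib]
    simp
  have h : eLpNorm (cornerFun u v a j) p volume ≤
      eLpNorm ((Set.Icc (-a) a).indicator fun _ => (1 : ℝ)) p volume := by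
    refine eLpNorm_mono fun x => ?_
    by_cases hx : x ∈ Set.Icc (-a) a
    · simpa [hx] using abs_cornerFun_le_one hu hv a j x
    · have : ∃ i, 1 < |x i / a i| := by
        by_contra! hcon
        refine hx ⟨fun i => ?_, fun i => ?_⟩ <;>
        · have := hcon i
          rw [abs_div, abs_of_pos (ha i), div_le_one (ha i), abs_le] at this
          simp only [Pi.neg_apply]
          linarith
      obtain ⟨i, hi⟩ := this
      rw [cornerFun, Finset.prod_eq_zero (Finset.mem_univ i) (hsupp i _ hi)]
      simp
  refine h.trans (le_of_eq ?_)
  rw [eLpNorm_indicator_const measurableSet_Icc hp0 hp, hvol]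
  simp

lemma projM_mul_diffM_transpose {m : ℕ} (j : Corner m) :
    projM j * (diffM m).transpose = Matrix.diagonal fun i => if j i = 0 then 1 else -1 := by
  ext i k
  simp only [Matrix.mul_apply, projM, Matrix.of_apply, ite_mul, one_mul, zero_mul,
    Finset.sum_ite_eq', Finset.mem_univ, if_true, Matrix.transpose_apply]
  by_cases hj : j i = 0 <;>
    simp [sel, hj, diffM, Matrix.one_apply, Matrix.diagonal_apply, eq_comm, apply_ite]

lemma abs_det_projM_mul_diffM {m : ℕ} (j : Corner m) :
    |(projM j * (diffM m).transpose).det| = 1 := by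
  rw [projM_mul_diffM_transpose, Matrix.det_diagonal, Finset.abs_prod]
  refine Finset.prod_eq_one fun i _ => ?_
  split_ifs <;> simp

lemma exists_isReg_diffM (m : ℕ) :
    ∃ Δ : ℝ, 1 < Δ ∧ ∀ j : Corner m, IsReg Δ (projM j * (diffM m).transpose) := by
  have hn : ∀ j : Corner m, 0 ≤ opNorm (projM j * (diffM m).transpose) := fun j => norm_nonneg _
  have hs := Finset.sum_nonneg fun (j : Corner m) (_ : j ∈ Finset.univ) => hn j
  refine ⟨2 + ∑ j : Corner m, opNorm (projM j * (diffM m).transpose), by linarith,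
    fun j => ⟨?_, ?_, ?_⟩⟩
  · linarith [Finset.single_le_sum (fun j _ => hn j) (Finset.mem_univ j)]
  · rw [← abs_pos, abs_det_projM_mul_diffM]
    exact one_pos
  · rw [abs_det_projM_mul_diffM]
    linarith

/-- The exponent `2^{m-1}` at the corners with `j(i₀) = 0`, and `∞` elsewhere. -/
def expo {m : ℕ} (i₀ : Fin m) (j : Corner m) : ℝ≥0∞ := if j i₀ = 0 then 2 ^ (m - 1) else ⊤

lemma ofReal_lt_expo {m : ℕ} (i₀ : Fin m) {q : ℝ} (hq : q < 2 ^ (m - 1)) (j : Corner m) :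
    ENNReal.ofReal q < expo i₀ j := by
  rw [expo]
  split_ifs
  · have h : (2 : ℝ≥0∞) ^ (m - 1) = ENNReal.ofReal (2 ^ (m - 1)) := by
      rw [ENNReal.ofReal_pow zero_le_two, ENNReal.ofReal_ofNat]
    rw [h]
    exact (ENNReal.ofReal_lt_ofReal_iff (by positivity)).mpr hq
  · exact ENNReal.ofReal_lt_top

lemma sum_inv_expo {m : ℕ} (i₀ : Fin m) : ∑ j : Corner m, (expo i₀ j)⁻¹ = 1 := by
  have h : ∀ j : Corner m, (expo i₀ j)⁻¹ = if j i₀ = 0 then (2 ^ (m - 1) : ℝ≥0∞)⁻¹ else 0 :=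
    fun j => by rw [expo]; split_ifs <;> simp
  simp only [h]
  rw [← Finset.sum_filter, Finset.sum_const, card_filter_corner, nsmul_eq_mul]
  push_cast
  exact ENNReal.mul_inv_cancel (by positivity) (by finiteness)

lemma prod_eLpNorm_cornerFun_le {m : ℕ} (i₀ : Fin m) {u v : Fin m → ℝ → ℝ}
    (hu : ∀ i t, |u i t| ≤ 1) (hv : ∀ i t, |v i t| ≤ 1) {a : Fin m → ℝ} (ha : ∀ i, 0 < a i)
    (hu0 : ∀ i t, 1 < |t| → u i t = 0) (hv0 : ∀ i, i ≠ i₀ → ∀ t, 1 < |t| → v i t = 0) :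
    ∏ j : Corner m, eLpNorm (cornerFun u v a j) (expo i₀ j) volume ≤
      ENNReal.ofReal (2 ^ m * ∏ i, a i) := by
  set X := ENNReal.ofReal (2 ^ m * ∏ i, a i) with hX
  have htr : ((2 : ℝ≥0∞) ^ (m - 1)).toReal = ((2 ^ (m - 1) : ℕ) : ℝ) := by simp
  have h : ∀ j : Corner m, eLpNorm (cornerFun u v a j) (expo i₀ j) volume ≤
      if j i₀ = 0 then X ^ (1 / ((2 ^ (m - 1) : ℕ) : ℝ)) else 1 := fun j => by
    rw [expo]
    split_ifs with hj
    · rw [← htr]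
      refine eLpNorm_cornerFun_le hu hv ha j (fun i t ht => ?_) (by positivity) (by finiteness)
      split_ifs with hi
      · exact hu0 i t ht
      · exact hv0 i (fun hii => hi (hii ▸ hj)) t ht
    · exact eLpNorm_top_cornerFun_le hu hv a j
  refine (Finset.prod_le_prod' fun j _ => h j).trans (le_of_eq ?_)
  rw [← Finset.prod_filter, Finset.prod_const, card_filter_corner, ← ENNReal.rpow_natCast,
    ← ENNReal.rpow_mul, one_div_mul_cancel (by positivity), ENNReal.rpow_one]

lemma exists_bump_unit : ∃ u : ℝ → ℝ, ContDiff ℝ ∞ u ∧ HasCompactSupport u ∧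
    (∀ t, 0 ≤ u t) ∧ (∀ t, u t ≤ 1) ∧ (∀ t, 1 < |t| → u t = 0) ∧ u 0 ≠ 0 := by
  let b : ContDiffBump (0 : ℝ) := ⟨1 / 2, 1, by norm_num, by norm_num⟩
  refine ⟨b, b.contDiff, b.hasCompactSupport, fun t => b.nonneg, fun t => b.le_one,
    fun t ht => b.zero_of_le_dist ?_, ?_⟩
  · simpa [Real.dist_eq] using ht.le
  · rw [b.one_of_mem_closedBall (by simp [b])]
    exact one_ne_zero

lemma exists_bump_interval {T : ℝ} (hT : 3 ≤ T) : ∃ v : ℝ → ℝ, ContDiff ℝ ∞ v ∧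
    HasCompactSupport v ∧ (∀ t, 0 ≤ v t) ∧ (∀ t, v t ≤ 1) ∧ (∀ t < 2, v t = 0) ∧
    ∀ t ∈ Set.Icc 3 T, v t = 1 := by
  let b : ContDiffBump ((3 + T) / 2) := ⟨(T - 3) / 2 + 1 / 2, (T - 3) / 2 + 1, by linarith,
    by linarith⟩
  refine ⟨b, b.contDiff, b.hasCompactSupport, fun t => b.nonneg, fun t => b.le_one,
    fun t ht => b.zero_of_le_dist ?_, fun t ht => b.one_of_mem_closedBall ?_⟩
  · rw [Real.dist_eq, abs_sub_comm]
    refine le_trans ?_ (le_abs_self _)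
    simp only [b]
    linarith
  · rw [Metric.mem_closedBall, Real.dist_eq, abs_le]
    simp only [b]
    constructor <;> linarith [ht.1, ht.2]

lemma hasCompactSupport_pow {f : ℝ → ℝ} (hf : HasCompactSupport f) {n : ℕ} (hn : n ≠ 0) :
    HasCompactSupport fun t => f t ^ n :=
  hf.comp_left (g := fun s : ℝ => s ^ n) (zero_pow hn)

lemma integral_pos_of_test {f : ℝ → ℝ} (hf : Continuous f) (hc : HasCompactSupport f)
    (hn : ∀ t, 0 ≤ f t) (h0 : f 0 ≠ 0) : 0 < ∫ t, f t :=
  hf.integral_pos_of_hasCompactSupport_nonneg_nonzero hc hn h0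

/-- No constant bounds the form with multiplier `c η_{i₀}/|η|` by the product of the norms. -/
lemma exists_large_pv {m : ℕ} (i₀ : Fin m) {c : ℝ} (hc : 0 < c) (C : ℝ≥0) :
    ∃ F : Corner m → (Fin m → ℝ) → ℝ,
      (∀ j, ContDiff ℝ ∞ (F j) ∧ HasCompactSupport (F j)) ∧
      C * (∏ j : Corner m, eLpNorm (F j) (expo i₀ j) volume) <
        ENNReal.ofReal ‖pv (diffM m) (fun η => (c : ℂ) * riesz i₀ η) F‖ := by
  obtain ⟨u, hu, huc, hun, hu1, hu0, hu00⟩ := exists_bump_unit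
  set N : ℕ := 2 ^ (m - 1) with hN
  have hN0 : N ≠ 0 := by positivity
  set U : ℝ → ℝ := fun t => u t ^ N with hU
  have hUs : ContDiff ℝ ∞ U := hu.pow N
  have hUc : HasCompactSupport U := hasCompactSupport_pow huc hN0
  have hUn : ∀ t, 0 ≤ U t := fun t => pow_nonneg (hun t) N
  have hU0 : ∀ t, 1 < |t| → U t = 0 := fun t ht => by simp [hU, hu0 t ht, hN0]
  have hUpos : 0 < ∫ t, U t := integral_pos_of_test hUs.continuous hUc hUn (pow_ne_zero N hu00)
  have hS : 0 < ∫ t, U t ^ 2 := integral_pos_of_test (hUs.continuous.pow 2)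
    (hasCompactSupport_pow hUc two_ne_zero) (fun t => sq_nonneg _)
    (pow_ne_zero 2 (pow_ne_zero N hu00))
  set S := ∫ t, U t ^ 2 with hSdef
  have hlog : Tendsto (fun T : ℝ => c * ((Real.pi⁻¹ * ((∫ t, U t) * Real.log ((T + 1) / 4))) *
      S ^ (m - 1))) atTop atTop := by
    refine Tendsto.const_mul_atTop hc (Tendsto.atTop_mul_const (by positivity)
      (Tendsto.const_mul_atTop (inv_pos.mpr Real.pi_pos) (Tendsto.const_mul_atTop hUpos ?_)))
    exact Real.tendsto_log_atTop.comp
      ((tendsto_atTop_add_const_right _ _ tendsto_id).atTop_div_const (by norm_num))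
  obtain ⟨T, hTbig, hT⟩ := ((hlog.eventually_gt_atTop (C * 2 ^ m)).and
    (eventually_ge_atTop 3)).exists
  obtain ⟨v, hv, hvc, hvn, hv1, hv0, hvT⟩ := exists_bump_interval hT
  set V : ℝ → ℝ := fun t => v t ^ N with hV
  have hVs : ContDiff ℝ ∞ V := hv.pow N
  have hVc : HasCompactSupport V := hasCompactSupport_pow hvc hN0
  have hHil := log_le_norm_integral_ft_neg_mul_ft_mul_sign hUs hUc hU0 hUn hVs hVc
    (fun y hy => by simp [hV, hv0 y hy, hN0]) (fun y => pow_nonneg (hvn y) N) hT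
    (fun y hy => by simp [hV, hvT y hy])
  let g : Fin m → ℝ → ℝ := fun i => if i = i₀ then v else u
  have hg : ∀ i, ContDiff ℝ ∞ (g i) ∧ HasCompactSupport (g i) ∧ ∀ t, |g i t| ≤ 1 := fun i => by
    by_cases hi : i = i₀
    · simp only [g, if_pos hi]
      exact ⟨hv, hvc, fun t => (abs_of_nonneg (hvn t)).trans_le (hv1 t)⟩
    · simp only [g, if_neg hi]
      exact ⟨hu, huc, fun t => (abs_of_nonneg (hun t)).trans_le (hu1 t)⟩
  have hlim := tendsto_integral_prod_mul_riesz i₀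
    (G := fun i t => ft U (-t) * ft (fun s => g i s ^ N) t)
    fun i => integrable_ft_neg_mul_ft hUs hUc ((hg i).1.pow N)
      (hasCompactSupport_pow (hg i).2.1 hN0)
  have hprod : ‖∏ i, ∫ t, ft U (-t) * ft (fun s => g i s ^ N) t *
      (if i = i₀ then ((SignType.sign t : ℝ) : ℂ) else 1)‖ =
      ‖∫ t : ℝ, ft U (-t) * ft V t * (SignType.sign t : ℝ)‖ * S ^ (m - 1) := by
    rw [norm_prod, ← Finset.mul_prod_erase _ _ (Finset.mem_univ i₀)]
    congr 1
    · simp [g, hV]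
    · rw [Finset.prod_congr rfl (g := fun _ => S), Finset.prod_const,
        Finset.card_erase_of_mem (Finset.mem_univ _), Finset.card_univ, Fintype.card_fin]
      intro i hi
      have hi' : i ≠ i₀ := Finset.ne_of_mem_erase hi
      simp only [g, if_neg hi', mul_one]
      rw [integral_ft_neg_mul_ft hUs hUc, Complex.norm_real, Real.norm_of_nonneg hS.le]
  have hbig : C * 2 ^ m < c * ‖∏ i, ∫ t, ft U (-t) * ft (fun s => g i s ^ N) t *
      (if i = i₀ then ((SignType.sign t : ℝ) : ℂ) else 1)‖ := by
    rw [hprod]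
    refine hTbig.trans_le ?_
    gcongr
  obtain ⟨M, hM, hM1⟩ := (((hlim.norm.const_mul c).eventually (lt_mem_nhds hbig)).and
    (eventually_ge_atTop 1)).exists
  set a : Fin m → ℝ := fun i => if i = i₀ then 1 else (M : ℝ) with ha_def
  have ha : ∀ i, 0 < a i := fun i => by
    simp only [ha_def]
    split_ifs
    · exact one_pos
    · exact_mod_cast hM1
  have hapos : 0 < ∏ i, a i := Finset.prod_pos fun i _ => ha i
  refine ⟨cornerFun (fun _ => u) g a, fun j =>
    ⟨contDiff_cornerFun (fun _ => hu) (fun i => (hg i).1) a j,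
      hasCompactSupport_cornerFun (fun _ => huc) (fun i => (hg i).2.1) ha j⟩, ?_⟩
  have hnorm := prod_eLpNorm_cornerFun_le i₀ (u := fun _ => u) (v := g)
    (fun _ t => (abs_of_nonneg (hun t)).trans_le (hu1 t)) (fun i => (hg i).2.2) ha (fun _ => hu0)
    (fun i hi => by simpa only [g, if_neg hi] using hu0)
  refine (mul_le_mul_right hnorm _).trans_lt ?_
  rw [pv_diffM_riesz i₀ c _ (fun _ => U) (fun i s => g i s ^ N) ha
    (prod_cornerFun (fun _ => u) g a), norm_mul, norm_mul, Complex.norm_real, Complex.norm_real,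
    Real.norm_of_nonneg hc.le, Real.norm_of_nonneg hapos.le, ← ENNReal.ofReal_coe_nnreal,
    ← ENNReal.ofReal_mul C.coe_nonneg]
  have hlt := mul_lt_mul_of_pos_right hM hapos
  refine (ENNReal.ofReal_lt_ofReal_iff ?_).mpr ?_
  · exact lt_of_le_of_lt (by positivity) (hlt.trans_eq (by ring))
  · calc _ = C * 2 ^ m * ∏ i, a i := by ring
      _ < _ := hlt
      _ = _ := by ring

/-- Theorem 5 (sharpness of the threshold `2^{m−1}`). -/
theorem statement4 (m : ℕ) (hm : 2 ≤ m) (q : ℝ) (hq : q < 2^(m-1)) :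
    ∃ Δ : ℝ, 1 < Δ ∧
    ∃ p : Corner m → ℝ≥0∞,
      (∀ j, ENNReal.ofReal q < p j) ∧ (∑ j : Corner m, (p j)⁻¹ = 1) ∧
      ∃ P : Matrix (Fin m) (Idx m) ℝ,
        (∀ j : Corner m, IsReg Δ (projM j * P.transpose)) ∧
        ∃ Khat : (Fin m → ℝ) → ℂ, IsCZ (2^(6*m)) Khat ∧
          ∀ C : ℝ≥0, ∃ F : Corner m → (Fin m → ℝ) → ℝ,
            (∀ j, ContDiff ℝ (⊤ : ℕ∞) (F j) ∧ HasCompactSupport (F j)) ∧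
            C * (∏ j : Corner m, eLpNorm (F j) (p j) volume) <
              ENNReal.ofReal ‖pv P Khat F‖ := by
  obtain ⟨Δ, hΔ, hreg⟩ := exists_isReg_diffM m
  let i₀ : Fin m := ⟨0, by omega⟩
  obtain ⟨c, hc, hCZ⟩ := exists_isCZ_riesz i₀ (2 ^ (6 * m))
  exact ⟨Δ, hΔ, expo i₀, ofReal_lt_expo i₀ hq, sum_inv_expo i₀, diffM m, hreg, _, hCZ,
    exists_large_pv i₀ hc⟩

end SBL
end
end

section
/- Let m ≥ 2 be an integer and α > 0. Then there is a constant C such that for every measurable function F on ℝ^m belonging to L^{2^{m−1}}(ℝ^m) and every λ > 0, the Lebesgue measure of the set {x ∈ ℝ^m : M_α(F)(x) > λ} is at most C λ^{−2^{m−1}} ‖F‖_{L^{2^{m−1}}}^{2^{m−1}}; that is, the modified strong maximal operator M_α is of weak type 2^{m−1}. -/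
open MeasureTheory Matrix
open scoped ENNReal NNReal BigOperators

noncomputable section

namespace SBL

/-- The sum over multi-indices of a product of geometric terms factors. -/
lemma tsum_prod_pow (m : ℕ) (c : ℝ≥0∞) :
    ∑' n : Fin m → ℕ, ∏ i, c ^ n i = ((1 - c)⁻¹) ^ m := by
  induction m with
  | zero => simp
  | succ k ih =>
    rw [← (Fin.consEquiv fun _ : Fin (k + 1) => ℕ).tsum_eq, ENNReal.tsum_prod']
    simp only [Fin.consEquiv, Equiv.coe_fn_mk, Fin.prod_univ_succ, Fin.cons_zero, Fin.cons_succ,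
      ENNReal.tsum_mul_left, ih, ENNReal.tsum_mul_right, ENNReal.tsum_geometric]
    rw [pow_succ, mul_comm]

lemma box_eq_Icc {m : ℕ} (a b : Fin m → ℝ) : box a b = Set.Icc a b := by
  ext x
  simp only [box, Set.mem_ofPred_eq, Set.mem_Icc, Pi.le_def, forall_and]

/-- Vitali covering estimate for boxes whose side lengths are comparable to multiples of a fixed
vector `r`; the constant does not depend on `r`. -/
lemma volume_iUnion_box_le {m : ℕ} (hm : m ≠ 0) (r : Fin m → ℝ) (hr : ∀ i, 0 < r i)
    (f : (Fin m → ℝ) → ℝ≥0∞) (hf : ∫⁻ x, f x ≠ ∞) (t : ℝ) (ht : 0 < t)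
    (T : Set ((Fin m → ℝ) × (Fin m → ℝ) × ℝ))
    (hL : ∀ q ∈ T, 0 < q.2.2)
    (hlow : ∀ q ∈ T, ∀ i, r i * q.2.2 ≤ 2 * (q.2.1 i - q.1 i))
    (hupp : ∀ q ∈ T, ∀ i, q.2.1 i - q.1 i ≤ r i * q.2.2)
    (hT : ∀ q ∈ T, ENNReal.ofReal t * volume (box q.1 q.2.1) ≤ ∫⁻ x in box q.1 q.2.1, f x) :
    volume (⋃ q ∈ T, box q.1 q.2.1) ≤ 9 ^ m * (ENNReal.ofReal t)⁻¹ * ∫⁻ x, f x := by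
  have hlt : ∀ q ∈ T, ∀ i, q.1 i < q.2.1 i := fun q hq i => by
    have := mul_pos (hr i) (hL q hq)
    linarith [hlow q hq i]
  have ht0 : ENNReal.ofReal t ≠ 0 := by simpa using ht
  have htop : ENNReal.ofReal t ≠ ∞ := ENNReal.ofReal_ne_top
  obtain ⟨K, hK⟩ : ∃ K : ℝ, ∀ q ∈ T, q.2.2 ≤ K := by
    refine ⟨max 1 ((∫⁻ x, f x).toReal / (t * ∏ i, r i / 2)), fun q hq => ?_⟩
    rcases le_total q.2.2 1 with h1 | h1
    · exact h1.trans (le_max_left _ _)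
    refine le_trans ?_ (le_max_right _ _)
    have hprod : 0 < t * ∏ i, r i / 2 :=
      mul_pos ht (Finset.prod_pos fun i _ => half_pos (hr i))
    rw [le_div_iff₀ hprod]
    have h2 : t * ∏ i, (q.2.1 i - q.1 i) ≤ (∫⁻ x, f x).toReal := by
      have h3 := (hT q hq).trans (setLIntegral_le_lintegral _ _)
      rw [box_eq_Icc, Real.volume_Icc_pi,
        ← ENNReal.ofReal_prod_of_nonneg fun i _ => (sub_pos.2 (hlt q hq i)).le,
        ← ENNReal.ofReal_mul ht.le] at h3
      exact (ENNReal.ofReal_le_iff_le_toReal hf).1 h3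
    have h4 : ∏ i, (q.2.2 * (r i / 2)) ≤ ∏ i, (q.2.1 i - q.1 i) :=
      Finset.prod_le_prod (fun i _ => mul_nonneg (hL q hq).le (half_pos (hr i)).le)
        fun i _ => by linarith [hlow q hq i]
    rw [Finset.prod_mul_distrib, Finset.prod_const, Finset.card_univ, Fintype.card_fin] at h4
    have h5 : q.2.2 ≤ q.2.2 ^ m := le_self_pow₀ h1 hm
    calc q.2.2 * (t * ∏ i, r i / 2) ≤ q.2.2 ^ m * (t * ∏ i, r i / 2) := by gcongr
      _ = t * (q.2.2 ^ m * ∏ i, r i / 2) := by ring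
      _ ≤ t * ∏ i, (q.2.1 i - q.1 i) := by gcongr
      _ ≤ _ := h2
  obtain ⟨u, huT, hdisj, hcov⟩ := Vitali.exists_disjoint_subfamily_covering_enlargement
    (fun q : (Fin m → ℝ) × (Fin m → ℝ) × ℝ => box q.1 q.2.1) T (fun q => q.2.2) 2 one_lt_two
    (fun q hq => (hL q hq).le) K hK
    (fun q hq => ⟨q.1, fun i => ⟨le_rfl, (hlt q hq i).le⟩⟩)
  have hcount : u.Countable := by
    refine hdisj.countable_of_nonempty_interior fun q hq => ?_
    have hq' := hlt q (huT hq)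
    refine ⟨fun i => (q.1 i + q.2.1 i) / 2, ?_⟩
    rw [box_eq_Icc, ← Set.pi_univ_Icc, interior_pi_set Set.finite_univ]
    intro i _
    dsimp only
    rw [interior_Icc]
    constructor <;> linarith [hq' i]
  have hsub : (⋃ q ∈ T, box q.1 q.2.1) ⊆ ⋃ q ∈ u,
      Set.Icc (fun i => q.1 i - 4 * (q.2.1 i - q.1 i))
        (fun i => q.2.1 i + 4 * (q.2.1 i - q.1 i)) := by
    refine Set.iUnion₂_subset fun q hq x hx => ?_
    obtain ⟨p, hp, ⟨y, hyq, hyp⟩, hqp⟩ := hcov q hq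
    refine Set.mem_iUnion₂.2 ⟨p, hp, ?_, ?_⟩ <;> intro i <;>
    · have h1 := hupp q hq i
      have h2 := hlow p (huT hp) i
      have h3 := mul_le_mul_of_nonneg_left hqp (hr i).le
      have h4 := hx i
      have h5 := hyq i
      have h6 := hyp i
      dsimp only
      linarith
  calc volume (⋃ q ∈ T, box q.1 q.2.1)
      ≤ ∑' q : u, volume (Set.Icc (fun i => q.1.1 i - 4 * (q.1.2.1 i - q.1.1 i))
        (fun i => q.1.2.1 i + 4 * (q.1.2.1 i - q.1.1 i))) :=
        (measure_mono hsub).trans (measure_biUnion_le _ hcount _)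
    _ ≤ ∑' q : u, 9 ^ m * (ENNReal.ofReal t)⁻¹ * ∫⁻ x in box q.1.1 q.1.2.1, f x := by
        refine ENNReal.tsum_le_tsum fun q => ?_
        have h1 : volume (Set.Icc (fun i => q.1.1 i - 4 * (q.1.2.1 i - q.1.1 i))
            (fun i => q.1.2.1 i + 4 * (q.1.2.1 i - q.1.1 i))) =
            9 ^ m * volume (box q.1.1 q.1.2.1) := by
          rw [box_eq_Icc, Real.volume_Icc_pi, Real.volume_Icc_pi]
          have h9 : (9 : ℝ≥0∞) ^ m = ∏ _i : Fin m, ENNReal.ofReal 9 := by simp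
          rw [h9, ← Finset.prod_mul_distrib]
          refine Finset.prod_congr rfl fun i _ => ?_
          rw [← ENNReal.ofReal_mul (by norm_num)]
          congr 1
          ring
        rw [h1, mul_assoc]
        gcongr
        rw [mul_comm, ← div_eq_mul_inv,
          ENNReal.le_div_iff_mul_le (Or.inl ht0) (Or.inl htop), mul_comm]
        exact hT q.1 (huT q.2)
    _ = 9 ^ m * (ENNReal.ofReal t)⁻¹ * ∫⁻ x in ⋃ q ∈ u, box q.1 q.2.1, f x := by
        rw [ENNReal.tsum_mul_left, lintegral_biUnion hcount
          (fun q _ => by rw [box_eq_Icc]; exact measurableSet_Icc) hdisj]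
    _ ≤ _ := by
        gcongr
        exact Measure.restrict_le_self

lemma ecc_le_div {m : ℕ} {a b : Fin m → ℝ} (hab : ∀ i, a i < b i) (i : Fin m) :
    ecc a b ≤ (b i - a i) / ⨆ k, (b k - a k) := by
  unfold ecc
  have h := (sub_pos.2 (hab i)).trans_le (le_ciSup (Set.finite_range fun k => b k - a k).bddAbove i)
  gcongr
  exact ciInf_le (Set.finite_range fun k => b k - a k).bddBelow i

/-- The weighted average over a box exceeds `lam` only if the integral over the box is large. -/
lemma volume_box_le_of_lt {m : ℕ} (hm : 1 ≤ m) {α : ℝ} {F : (Fin m → ℝ) → ℝ}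
    (hF : Integrable fun x => |F x| ^ (2 ^ (m - 1) : ℕ)) {lam : ℝ} (hlam : 0 < lam)
    {a b : Fin m → ℝ} (hab : ∀ i, a i < b i) (hecc : 0 ≤ ecc a b) {w : ℝ} (hw : 0 < w)
    (hew : ecc a b ^ α ≤ w)
    (h : lam < (ecc a b ^ α) ^ ((2:ℝ) ^ ((1:ℤ) - (m:ℤ))) * avg (box a b) F) :
    ENNReal.ofReal (lam ^ (2 ^ (m - 1) : ℕ) / w) * volume (box a b) ≤
      ∫⁻ x in box a b, ENNReal.ofReal (|F x| ^ (2 ^ (m - 1) : ℕ)) := by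
  have hV : 0 < (volume (box a b)).toReal := by
    rw [box_eq_Icc, Real.volume_Icc_pi_toReal fun i => (hab i).le]
    exact Finset.prod_pos fun i _ => sub_pos.2 (hab i)
  have hVtop : volume (box a b) ≠ ∞ := fun h => by simp [h] at hV
  have hI : 0 ≤ ∫ x in box a b, |F x| ^ (2 ^ (m - 1) : ℕ) :=
    integral_nonneg fun x => by positivity
  have hq : (2:ℝ) ^ ((1:ℤ) - (m:ℤ)) = (((2 ^ (m - 1) : ℕ) : ℝ))⁻¹ := by
    rw [show (1:ℤ) - m = -((m - 1 : ℕ) : ℤ) by omega, _root_.zpow_neg, zpow_natCast]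
    push_cast
    rfl
  have he : 0 ≤ ecc a b ^ α := Real.rpow_nonneg hecc α
  have hA : 0 ≤ (volume (box a b)).toReal⁻¹ * ∫ x in box a b, |F x| ^ (2 ^ (m - 1) : ℕ) := by
    positivity
  rw [avg, hq, ← Real.mul_rpow he hA] at h
  have h1 := pow_lt_pow_left₀ h hlam.le (n := 2 ^ (m - 1)) (by positivity)
  rw [Real.rpow_inv_natCast_pow (mul_nonneg he hA) (by positivity)] at h1
  have h2 : lam ^ (2 ^ (m - 1) : ℕ) / w * (volume (box a b)).toReal ≤
      ∫ x in box a b, |F x| ^ (2 ^ (m - 1) : ℕ) := by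
    have h3 := h1.le.trans (mul_le_mul_of_nonneg_right hew hA)
    rw [div_mul_eq_mul_div, div_le_iff₀ hw, ← le_div_iff₀ hV]
    refine h3.trans_eq ?_
    field_simp
  rw [← ofReal_integral_eq_lintegral_ofReal hF.integrableOn
    (Filter.Eventually.of_forall fun x => by positivity), ← ENNReal.ofReal_toReal hVtop,
    ← ENNReal.ofReal_mul (by positivity)]
  exact ENNReal.ofReal_le_ofReal h2

/-- Lemma (weak type `2^{m−1}` bound for the modified strong maximal operator `M_α`). -/
theorem statement5 (m : ℕ) (hm : 2 ≤ m) (α : ℝ) (hα : 0 < α) :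
    ∃ C : ℝ≥0, ∀ F : (Fin m → ℝ) → ℝ, Measurable F →
      MemLp F ((2:ℝ≥0∞)^(m-1)) volume →
      ∀ lam : ℝ, 0 < lam →
        volume {x : Fin m → ℝ | ENNReal.ofReal lam < Mal α F {x}} ≤
          C * ENNReal.ofReal (lam ^ (-(2:ℤ)^(m-1))) *
            (eLpNorm F ((2:ℝ≥0∞)^(m-1)) volume) ^ (2^(m-1) : ℕ) := by
  have hm0 : m ≠ 0 := by omega
  have hmR : (0 : ℝ) < m := by positivity
  have : Nonempty (Fin m) := ⟨⟨0, by omega⟩⟩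
  set c : ℝ := (2⁻¹ : ℝ) ^ (α / m) with hc
  have hc0 : 0 < c := by positivity
  have hc1 : c < 1 := Real.rpow_lt_one (by norm_num) (by norm_num) (by positivity)
  have hsum : ((1 - ENNReal.ofReal c)⁻¹) ^ m ≠ ∞ :=
    ENNReal.pow_ne_top (ENNReal.inv_ne_top.2 (tsub_pos_of_lt (by simpa using hc1)).ne')
  refine ⟨(9 ^ m * ((1 - ENNReal.ofReal c)⁻¹) ^ m).toNNReal, fun F hFm hF lam hlam => ?_⟩
  rw [ENNReal.coe_toNNReal (ENNReal.mul_ne_top (by simp) hsum)]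
  have hp0 : (2 ^ (m - 1) : ℕ) ≠ 0 := by positivity
  have hpcast : (2:ℝ≥0∞) ^ (m - 1) = ((2 ^ (m - 1) : ℕ) : ℝ≥0∞) := by push_cast; rfl
  rw [hpcast] at hF ⊢
  have hint : Integrable fun x => |F x| ^ (2 ^ (m - 1) : ℕ) := by
    simpa only [Real.norm_eq_abs] using hF.integrable_norm_pow hp0
  set f : (Fin m → ℝ) → ℝ≥0∞ := fun x => ENNReal.ofReal (|F x| ^ (2 ^ (m - 1) : ℕ))
  have hnorm : eLpNorm F ((2 ^ (m - 1) : ℕ) : ℝ≥0∞) volume ^ (2 ^ (m - 1) : ℕ) =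
      ∫⁻ x, f x := by
    rw [eLpNorm_eq_lintegral_rpow_enorm_toReal (by simp) (by simp), ENNReal.toReal_natCast,
      one_div, ENNReal.rpow_inv_natCast_pow hp0]
    refine lintegral_congr fun x => ?_
    rw [ENNReal.rpow_natCast, ← ofReal_norm, Real.norm_eq_abs,
      ← ENNReal.ofReal_pow (abs_nonneg _)]
  have hftop : ∫⁻ x, f x ≠ ∞ := by
    rw [← hnorm]
    exact ENNReal.pow_ne_top hF.eLpNorm_ne_top
  set P : ℝ := lam ^ (2 ^ (m - 1) : ℕ) with hP
  have hP0 : 0 < P := by positivity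
  have hPinv : ENNReal.ofReal (lam ^ (-(2:ℤ) ^ (m - 1))) = (ENNReal.ofReal P)⁻¹ := by
    rw [← ENNReal.ofReal_inv_of_pos hP0, hP, _root_.zpow_neg]
    norm_cast
  rw [hnorm, hPinv]
  set W : (Fin m → ℕ) → ℝ := fun n => ∏ i, c ^ n i with hW
  have hW0 : ∀ n, 0 < W n := fun n => Finset.prod_pos fun i _ => pow_pos hc0 _
  set T : (Fin m → ℕ) → Set ((Fin m → ℝ) × (Fin m → ℝ) × ℝ) := fun n =>
    {q | 0 < q.2.2 ∧ (∀ i, ((2:ℝ) ^ n i)⁻¹ * q.2.2 ≤ 2 * (q.2.1 i - q.1 i)) ∧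
      (∀ i, q.2.1 i - q.1 i ≤ ((2:ℝ) ^ n i)⁻¹ * q.2.2) ∧
      ENNReal.ofReal (P / W n) * volume (box q.1 q.2.1) ≤ ∫⁻ x in box q.1 q.2.1, f x}
  have hcover : {x : Fin m → ℝ | ENNReal.ofReal lam < Mal α F {x}} ⊆
      ⋃ n, ⋃ q ∈ T n, box q.1 q.2.1 := by
    intro x hx
    simp only [Mal, Set.mem_ofPred_eq, lt_iSup_iff, Set.singleton_subset_iff] at hx
    obtain ⟨a, b, hab, hxab, hx⟩ := hx
    have hlt := (ENNReal.ofReal_lt_ofReal_iff_of_nonneg hlam.le).1 hx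
    set L : ℝ := ⨆ i, (b i - a i)
    have hle : ∀ i, b i - a i ≤ L := le_ciSup (Set.finite_range fun k => b k - a k).bddAbove
    have hside : ∀ i, 0 < b i - a i := fun i => sub_pos.2 (hab i)
    have hL0 : 0 < L := (hside (Classical.arbitrary _)).trans_le (hle _)
    have hecc : 0 ≤ ecc a b := div_nonneg (le_ciInf fun i => (hside i).le) hL0.le
    choose n hn1 hn2 using fun i =>
      exists_nat_pow_near ((one_le_div (hside i)).2 (hle i)) (one_lt_two (α := ℝ))
    have hupp : ∀ i, b i - a i ≤ ((2:ℝ) ^ n i)⁻¹ * L := fun i => by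
      have := hn1 i
      rw [le_div_iff₀ (hside i)] at this
      rwa [inv_mul_eq_div, le_div_iff₀' (by positivity)]
    have hlow : ∀ i, ((2:ℝ) ^ n i)⁻¹ * L ≤ 2 * (b i - a i) := fun i => by
      have := (hn2 i).le
      rw [div_le_iff₀ (hside i), pow_succ] at this
      rw [inv_mul_eq_div, div_le_iff₀' (by positivity)]
      linarith
    have heW : ecc a b ^ α ≤ W n := by
      have h1 : ∀ i, ecc a b ^ (α / m) ≤ c ^ n i := fun i => by
        have h2 : ecc a b ≤ (2⁻¹ : ℝ) ^ n i := by
          refine (ecc_le_div hab i).trans ?_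
          rw [div_le_iff₀ hL0, inv_pow]
          exact hupp i
        refine (Real.rpow_le_rpow hecc h2 (by positivity)).trans_eq ?_
        rw [hc, ← Real.rpow_natCast, ← Real.rpow_natCast, ← Real.rpow_mul (by norm_num),
          ← Real.rpow_mul (by norm_num), mul_comm]
      calc ecc a b ^ α = ∏ _i : Fin m, ecc a b ^ (α / m) := by
            rw [Finset.prod_const, Finset.card_univ, Fintype.card_fin, ← Real.rpow_mul_natCast hecc,
              div_mul_cancel₀ _ hmR.ne']
        _ ≤ W n := Finset.prod_le_prod (fun i _ => Real.rpow_nonneg hecc _) fun i _ => h1 i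
    refine Set.mem_iUnion.2 ⟨n, Set.mem_iUnion₂.2 ⟨(a, b, L), ⟨hL0, hlow, hupp, ?_⟩, hxab⟩⟩
    exact volume_box_le_of_lt (by omega) hint hlam hab hecc (hW0 n) heW hlt
  calc volume {x : Fin m → ℝ | ENNReal.ofReal lam < Mal α F {x}}
      ≤ ∑' n, volume (⋃ q ∈ T n, box q.1 q.2.1) :=
        (measure_mono hcover).trans (measure_iUnion_le _)
    _ ≤ ∑' n, 9 ^ m * (ENNReal.ofReal (P / W n))⁻¹ * ∫⁻ x, f x :=
        ENNReal.tsum_le_tsum fun n => volume_iUnion_box_le hm0 (fun i => ((2:ℝ) ^ n i)⁻¹)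
          (fun i => by positivity) f hftop _ (div_pos hP0 (hW0 n)) (T n) (fun q hq => hq.1)
          (fun q hq => hq.2.1) (fun q hq => hq.2.2.1) fun q hq => hq.2.2.2
    _ = ∑' n : Fin m → ℕ,
          9 ^ m * (∏ i, ENNReal.ofReal c ^ n i) * ((ENNReal.ofReal P)⁻¹ * ∫⁻ x, f x) := by
        refine tsum_congr fun n => ?_
        rw [← ENNReal.ofReal_inv_of_pos (div_pos hP0 (hW0 n)), inv_div, div_eq_mul_inv,
          ENNReal.ofReal_mul (hW0 n).le, ENNReal.ofReal_inv_of_pos hP0, hW,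
          ENNReal.ofReal_prod_of_nonneg fun i _ => (pow_pos hc0 _).le]
        simp only [ENNReal.ofReal_pow hc0.le, mul_assoc]
    _ = _ := by
        rw [ENNReal.tsum_mul_right, ENNReal.tsum_mul_left, tsum_prod_pow]
        simp only [mul_assoc]

end SBL
end
end

section
/- Let m ≥ 1 be an integer. For any measurable functions F_j : ℝ^m → ℝ, j ∈ 𝒞, one has ∫_{ℝ^{2m}} ∏_{j∈𝒞} |F_j(Π_j x)| dx ≤ ∏_{j∈𝒞} ‖F_j‖_{L^{2^{m−1}}(ℝ^m)}; in particular, if the latter product is finite then |∫_{ℝ^{2m}} ∏_{j∈𝒞} F_j(Π_j x) dx| ≤ ∏_{j∈𝒞} ‖F_j‖_{L^{2^{m−1}}(ℝ^m)}. -/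
open MeasureTheory Matrix
open scoped ENNReal NNReal BigOperators

noncomputable section

namespace SBL

/-- **Finner's inequality** for marginals: if `f j` depends only on the coordinates in `S j` and the
weights `p` sum to one over the `j` with `i ∈ S j`, for every `i ∈ s`, then integrating
`∏ j, f j ^ p j` over the coordinates in `s` is bounded by the product of the powers of the
marginals of the `f j`. -/
theorem lmarginal_prod_rpow_le {ι κ : Type*} [DecidableEq ι] {X : ι → Type*}
    [∀ i, MeasurableSpace (X i)] (μ : ∀ i, Measure (X i)) [∀ i, SigmaFinite (μ i)]
    (t : Finset κ) (S : κ → Finset ι) {f : κ → (∀ i, X i) → ℝ≥0∞} (hf : ∀ j, Measurable (f j))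
    (hfS : ∀ j, DependsOn (f j) (S j)) {p : κ → ℝ} (hp : ∀ j, 0 ≤ p j) (s : Finset ι)
    (hpS : ∀ i ∈ s, ∑ j ∈ t with i ∈ S j, p j = 1) (x : ∀ i, X i) :
    (∫⋯∫⁻_s, (fun y ↦ ∏ j ∈ t, f j y ^ p j) ∂μ) x ≤
      ∏ j ∈ t, (∫⋯∫⁻_(s ∩ S j), f j ∂μ) x ^ p j := by
  induction s using Finset.induction generalizing x with
  | empty => simp
  | insert i s hi ih =>
    have hmarg (j : κ) :
        Measurable fun y ↦ (∫⋯∫⁻_(s ∩ S j), f j ∂μ) (Function.update x i y) :=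
      ((hf j).lmarginal μ).comp (measurable_update x)
    have hconst (j : κ) (hj : i ∉ S j) (y : X i) :
        (∫⋯∫⁻_(s ∩ S j), f j ∂μ) (Function.update x i y) = (∫⋯∫⁻_(s ∩ S j), f j ∂μ) x := by
      have hcomp : f j ∘ (Function.update · i y) = f j := by
        ext z
        exact hfS j fun k hk ↦ Function.update_of_ne (by rintro rfl; exact hj hk) _ _
      rw [lmarginal_update_of_notMem (hf j) (by simp [hi]), hcomp]
    rw [lmarginal_insert _ (Finset.measurable_fun_prod _ fun j _ ↦ (hf j).pow_const _) hi]
    calc ∫⁻ y, (∫⋯∫⁻_s, (fun y ↦ ∏ j ∈ t, f j y ^ p j) ∂μ) (Function.update x i y) ∂μ i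
        ≤ ∫⁻ y, ∏ j ∈ t, (∫⋯∫⁻_(s ∩ S j), f j ∂μ) (Function.update x i y) ^ p j ∂μ i :=
          lintegral_mono fun y ↦ ih (fun k hk ↦ hpS k (Finset.mem_insert_of_mem hk)) _
      _ = (∫⁻ y, ∏ j ∈ t with i ∈ S j,
            (∫⋯∫⁻_(s ∩ S j), f j ∂μ) (Function.update x i y) ^ p j ∂μ i) *
            ∏ j ∈ t with i ∉ S j, (∫⋯∫⁻_(s ∩ S j), f j ∂μ) x ^ p j := by
          rw [← lintegral_mul_const _ (Finset.measurable_fun_prod _ fun j _ ↦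
            (hmarg j).pow_const _)]
          refine lintegral_congr fun y ↦ ?_
          rw [← Finset.prod_filter_mul_prod_filter_not t (fun j ↦ i ∈ S j)]
          congr 1
          refine Finset.prod_congr rfl fun j hj ↦ ?_
          rw [hconst j (Finset.mem_filter.1 hj).2]
      _ ≤ (∏ j ∈ t with i ∈ S j,
            (∫⁻ y, (∫⋯∫⁻_(s ∩ S j), f j ∂μ) (Function.update x i y) ∂μ i) ^ p j) *
            ∏ j ∈ t with i ∉ S j, (∫⋯∫⁻_(s ∩ S j), f j ∂μ) x ^ p j := by
          gcongr
          exact ENNReal.lintegral_prod_norm_pow_le _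
            (fun j _ ↦ (hmarg j).aemeasurable)
            (hpS i (Finset.mem_insert_self i s)) fun j _ ↦ hp j
      _ = ∏ j ∈ t, (∫⋯∫⁻_(insert i s ∩ S j), f j ∂μ) x ^ p j := by
          rw [← Finset.prod_filter_mul_prod_filter_not t (fun j ↦ i ∈ S j)]
          congr 1 <;> refine Finset.prod_congr rfl fun j hj ↦ ?_
          · rw [Finset.insert_inter_of_mem (Finset.mem_filter.1 hj).2,
              lmarginal_insert _ (hf j) (by simp [hi])]
          · rw [Finset.insert_inter_of_notMem (Finset.mem_filter.1 hj).2]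

theorem sel_injective {m : ℕ} (j : Corner m) : Function.Injective (sel j) := by
  intro a b h
  unfold sel at h
  split_ifs at h <;> simpa using h

theorem measurable_proj {m : ℕ} (j : Corner m) : Measurable (proj j) :=
  measurable_pi_lambda _ fun i ↦ measurable_pi_apply (sel j i)

/-- Each coordinate of `ℝ^{2m}` is selected by exactly half of the corners. -/
theorem card_filter_mem_image_sel {m : ℕ} (k : Idx m) :
    (Finset.univ.filter fun j : Corner m ↦ k ∈ Finset.univ.image (sel j)).card = 2 ^ (m - 1) := by
  have key (i : Fin m) (a : Fin 2) :
      (Finset.univ.filter fun j : Corner m ↦ j i = a).card = 2 ^ (m - 1) := by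
    simpa using Fintype.card_filter_piFinset_const_eq_of_mem (Finset.univ : Finset (Fin 2)) i
      (Finset.mem_univ a)
  rcases k with i | i
  · rw [← key i 0]
    congr 1
    ext j
    simp only [Finset.mem_filter, Finset.mem_univ, true_and, Finset.mem_image, sel]
    grind
  · rw [← key i 1]
    congr 1
    ext j
    simp only [Finset.mem_filter, Finset.mem_univ, true_and, Finset.mem_image, sel]
    grind

/-- Brascamp–Lieb inequality for the projections `Π_j` and nonnegative functions. -/
theorem lintegral_prod_proj_rpow_le {m : ℕ} {f : Corner m → (Fin m → ℝ) → ℝ≥0∞}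
    (hf : ∀ j, Measurable (f j)) :
    ∫⁻ x : Idx m → ℝ, ∏ j : Corner m, f j (proj j x) ^ (1 / (2 : ℝ) ^ (m - 1)) ≤
      ∏ j : Corner m, (∫⁻ y, f j y) ^ (1 / (2 : ℝ) ^ (m - 1)) := by
  have h := lmarginal_prod_rpow_le (fun _ : Idx m ↦ (volume : Measure ℝ)) Finset.univ
    (fun j : Corner m ↦ Finset.univ.image (sel j)) (f := fun j ↦ f j ∘ proj j)
    (fun j ↦ (hf j).comp (measurable_proj j))
    (fun j x y hxy ↦ congrArg (f j) (funext fun i ↦ hxy _ (by simp)))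
    (p := fun _ ↦ 1 / (2 : ℝ) ^ (m - 1)) (fun _ ↦ by positivity) Finset.univ
    (fun k _ ↦ by
      rw [Finset.sum_const, card_filter_mem_image_sel]
      simp) 0
  rw [← lintegral_eq_lmarginal_univ] at h
  refine h.trans_eq (Finset.prod_congr rfl fun j _ ↦ ?_)
  rw [Finset.univ_inter]
  have himage := lmarginal_image (μ := fun _ : Idx m ↦ (volume : Measure ℝ)) (sel_injective j)
    Finset.univ (hf j) 0
  rw [lmarginal_univ] at himage
  exact congrArg (· ^ _) himage

/-- Lemma (Brascamp–Lieb inequality for the projections `Π_j`). -/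
theorem statement6 (m : ℕ) (hm : 1 ≤ m) (F : Corner m → (Fin m → ℝ) → ℝ)
    (hF : ∀ j, Measurable (F j)) :
    (∫⁻ x : Idx m → ℝ, ∏ j : Corner m, ENNReal.ofReal |F j (proj j x)|) ≤
        (∏ j : Corner m, eLpNorm (F j) ((2:ℝ≥0∞)^(m-1)) volume) ∧
    ((∏ j : Corner m, eLpNorm (F j) ((2:ℝ≥0∞)^(m-1)) volume) < ⊤ →
      ENNReal.ofReal |∫ x : Idx m → ℝ, ∏ j : Corner m, F j (proj j x)| ≤
        ∏ j : Corner m, eLpNorm (F j) ((2:ℝ≥0∞)^(m-1)) volume) := by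
  have hmain : ∫⁻ x : Idx m → ℝ, ∏ j : Corner m, ENNReal.ofReal |F j (proj j x)| ≤
      ∏ j : Corner m, eLpNorm (F j) ((2:ℝ≥0∞)^(m-1)) volume := by
    have hpos : (0 : ℝ) < 2 ^ (m - 1) := by positivity
    convert lintegral_prod_proj_rpow_le
      (f := fun j y ↦ ‖F j y‖ₑ ^ ((2 : ℝ) ^ (m - 1))) (fun j ↦ (hF j).enorm.pow_const _) using 4
      with x j _ j _
    · rw [← ENNReal.rpow_mul, mul_one_div_cancel hpos.ne', ENNReal.rpow_one,
        Real.enorm_eq_ofReal_abs]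
    · rw [eLpNorm_eq_lintegral_rpow_enorm_toReal (by simp) (by simp)]
      simp
  refine ⟨hmain, fun _ ↦ le_trans ?_ hmain⟩
  rw [← Real.enorm_eq_ofReal_abs]
  refine (enorm_integral_le_lintegral_enorm _).trans_eq (lintegral_congr fun x ↦ ?_)
  simp_rw [Real.enorm_eq_ofReal_abs, Finset.abs_prod]
  exact ENNReal.ofReal_prod_of_nonneg fun _ _ ↦ abs_nonneg _

end SBL
end
end

section
/- Let m ≥ 2 be an integer, let J be an injective real 2m×m matrix, let u ∈ ℝ^{2m} and 1 ≤ i ≤ m, and let (F_j)_{j∈𝒞} be a tuple of real-valued smooth compactly supported functions on ℝ^m. Then ∫_0^∞ ∫_{ℝ^m} | ∫_{ℝ^{2m}} (∏_{j∈𝒞} F_j(Π_j x)) (∂^0_i ∂^1_i g)_t(x − Jp + ut) dx | dp dt/t < ∞; that is, the integral over the upper half space (p,t) ∈ ℝ^m × (0,∞) is absolutely convergent. -/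
open MeasureTheory Matrix
open scoped ENNReal NNReal BigOperators

noncomputable section

namespace SBL

section Slices

open Module

variable {E P : Type*} [NormedAddCommGroup E] [NormedSpace ℝ E] [NormedAddCommGroup P]
  [NormedSpace ℝ P] {T : P →L[ℝ] E} {S : E →L[ℝ] P} [MeasurableSpace P] [BorelSpace P]
  {ν : Measure P} [ν.IsAddHaarMeasure]

/-- The slices of a ball by the translates of the range of a left invertible map have uniformly
bounded measure. -/
lemma lintegral_indicator_closedBall_comp_le (hST : Function.LeftInverse S T) (R : ℝ) (z : E) :
    ∫⁻ p, (Metric.closedBall (0 : E) R).indicator 1 (T p + z) ∂ν ≤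
      ν (Metric.closedBall 0 (‖S‖ * R)) := by
  have h : ∀ p, (Metric.closedBall (0 : E) R).indicator (1 : E → ℝ≥0∞) (T p + z) ≤
      (Metric.closedBall (0 : P) (‖S‖ * R)).indicator 1 (p + S z) := by
    intro p
    by_cases hp : T p + z ∈ Metric.closedBall (0 : E) R
    · have hp' : p + S z ∈ Metric.closedBall (0 : P) (‖S‖ * R) := by
        rw [mem_closedBall_zero_iff] at hp ⊢
        calc ‖p + S z‖ = ‖S (T p + z)‖ := by rw [map_add, hST p]
          _ ≤ ‖S‖ * R := S.le_opNorm_of_le hp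
      simp [Set.indicator_of_mem hp, Set.indicator_of_mem hp']
    · simp [Set.indicator_of_notMem hp]
  calc _ ≤ ∫⁻ p, (Metric.closedBall (0 : P) (‖S‖ * R)).indicator 1 (p + S z) ∂ν :=
        lintegral_mono h
    _ = ∫⁻ p, (Metric.closedBall (0 : P) (‖S‖ * R)).indicator 1 p ∂ν :=
        lintegral_add_right_eq_self _ _
    _ = ν (Metric.closedBall 0 (‖S‖ * R)) :=
        lintegral_indicator_one Metric.isClosed_closedBall.measurableSet

variable [FiniteDimensional ℝ E] [FiniteDimensional ℝ P] [MeasurableSpace E] [BorelSpace E]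
  {μ : Measure E} [μ.IsAddHaarMeasure]

/-- Averages against a mean zero kernel at scale `t`, integrated over the translates along a
subspace, are `O(t)`. -/
lemma exists_lintegral_enorm_integral_comp_le (hST : Function.LeftInverse S T) {Φ : E → ℝ}
    {K : ℝ≥0} (hΦ : LipschitzWith K Φ) {R : ℝ} (hR : ∀ x, R < ‖x‖ → Φ x = 0) {φ : E → ℝ}
    (hφ : Continuous φ) {C r : ℝ} (hφC : ∀ y, |φ y| ≤ C * (1 + ‖y‖) ^ (-r))
    (hr : (finrank ℝ E : ℝ) + 1 < r) (hφ0 : ∫ y, φ y ∂μ = 0) :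
    ∃ D : ℝ≥0∞, D ≠ ⊤ ∧ ∀ t : ℝ, 0 < t → ∀ u : E,
      ∫⁻ p, ‖∫ y, Φ (T p - t • u + t • y) * φ y ∂μ‖ₑ ∂ν ≤ ENNReal.ofReal t * D := by
  set B : Set E := Metric.closedBall 0 R with hB
  have hBm : MeasurableSet B := Metric.isClosed_closedBall.measurableSet
  set w : E → ℝ≥0∞ := fun y => ENNReal.ofReal (K * C * (1 + ‖y‖) ^ (-(r - 1))) with hw
  have hwm : Measurable w := by fun_prop
  have hwfin : ∫⁻ y, w y ∂μ ≠ ⊤ :=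
    ((integrable_one_add_norm (μ := μ) (by linarith)).const_mul (K * C)).lintegral_lt_top.ne
  have hφi : Integrable φ μ :=
    ((integrable_one_add_norm (μ := μ) (r := r) (by linarith)).const_mul C).mono'
      hφ.aestronglyMeasurable (.of_forall hφC)
  obtain ⟨M, hM⟩ : ∃ M, ∀ x, ‖Φ x‖ ≤ M :=
    (HasCompactSupport.intro (isCompact_closedBall (0 : E) R) fun x hx => hR x <| by
      simpa using hx).exists_bound_of_continuous hΦ.continuous
  have hpt : ∀ t : ℝ, 0 < t → ∀ a y : E, ‖(Φ (a + t • y) - Φ a) * φ y‖ₑ ≤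
      ENNReal.ofReal t * ((B.indicator 1 (a + t • y) + B.indicator 1 a) * w y) := by
    intro t ht a y
    by_cases hay : a + t • y ∈ B ∨ a ∈ B
    · have h1 : (1 : ℝ≥0∞) ≤ B.indicator 1 (a + t • y) + B.indicator 1 a := by
        rcases hay with h | h <;> simp [Set.indicator_of_mem h]
      have h2 : ‖(Φ (a + t • y) - Φ a) * φ y‖ ≤ t * (K * C * (1 + ‖y‖) ^ (-(r - 1))) := by
        have hL : ‖Φ (a + t • y) - Φ a‖ ≤ K * (t * ‖y‖) := by
          have := hΦ.dist_le_mul (a + t • y) a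
          rwa [dist_eq_norm, dist_eq_norm, add_sub_cancel_left, norm_smul, Real.norm_eq_abs t,
            abs_of_pos ht] at this
        have hpow : (1 + ‖y‖) ^ (-(r - 1)) = (1 + ‖y‖) * (1 + ‖y‖) ^ (-r) := by
          rw [show -(r - 1) = 1 + -r by ring, Real.rpow_add (by positivity), Real.rpow_one]
        rw [norm_mul, hpow]
        calc ‖Φ (a + t • y) - Φ a‖ * ‖φ y‖
            ≤ (K * (t * (1 + ‖y‖))) * (C * (1 + ‖y‖) ^ (-r)) := by
              gcongr
              · exact hL.trans (by gcongr; linarith)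
              · exact hφC y
          _ = _ := by ring
      rw [← ofReal_norm]
      calc ENNReal.ofReal ‖(Φ (a + t • y) - Φ a) * φ y‖
          ≤ ENNReal.ofReal (t * (K * C * (1 + ‖y‖) ^ (-(r - 1)))) := ENNReal.ofReal_le_ofReal h2
        _ = ENNReal.ofReal t * (1 * w y) := by rw [ENNReal.ofReal_mul ht.le, one_mul]
        _ ≤ _ := by gcongr
    · push Not at hay
      have h1 : Φ (a + t • y) = 0 := hR _ (by simpa [hB] using hay.1)
      have h2 : Φ a = 0 := hR _ (by simpa [hB] using hay.2)
      simp [h1, h2]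
  set V := ν (Metric.closedBall 0 (‖S‖ * R)) with hV
  have hVfin : V ≠ ⊤ := measure_closedBall_lt_top.ne
  refine ⟨∫⁻ y, (V + V) * w y ∂μ, ?_, fun t ht u => ?_⟩
  · rw [lintegral_const_mul _ hwm]
    exact ENNReal.mul_ne_top (by simp [hVfin]) hwfin
  have hI : ∀ a : E, ‖∫ y, Φ (a + t • y) * φ y ∂μ‖ₑ ≤
      ∫⁻ y, ENNReal.ofReal t * ((B.indicator 1 (a + t • y) + B.indicator 1 a) * w y) ∂μ := by
    intro a
    have hsub : ∫ y, Φ (a + t • y) * φ y ∂μ = ∫ y, (Φ (a + t • y) - Φ a) * φ y ∂μ := by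
      have hi : Integrable (fun y => Φ (a + t • y) * φ y) μ :=
        hφi.bdd_mul (hΦ.continuous.comp (by fun_prop)).aestronglyMeasurable
          (.of_forall fun y => hM _)
      simp only [sub_mul]
      rw [integral_sub hi (hφi.const_mul _), integral_const_mul, hφ0, mul_zero, sub_zero]
    rw [hsub]
    exact (enorm_integral_le_lintegral_enorm _).trans (lintegral_mono fun y => hpt t ht a y)
  have hind : Measurable (B.indicator (1 : E → ℝ≥0∞)) := measurable_one.indicator hBm
  calc ∫⁻ p, ‖∫ y, Φ (T p - t • u + t • y) * φ y ∂μ‖ₑ ∂ν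
      ≤ ∫⁻ p, ∫⁻ y, ENNReal.ofReal t * ((B.indicator 1 (T p - t • u + t • y) +
          B.indicator 1 (T p - t • u)) * w y) ∂μ ∂ν := lintegral_mono fun p => hI _
    _ = ∫⁻ y, ∫⁻ p, ENNReal.ofReal t * ((B.indicator 1 (T p - t • u + t • y) +
          B.indicator 1 (T p - t • u)) * w y) ∂ν ∂μ := by
        refine lintegral_lintegral_swap (Measurable.aemeasurable ?_)
        have h1 : Measurable fun z : P × E => T z.1 - t • u + t • z.2 :=
          Continuous.measurable (by fun_prop)
        have h2 : Measurable fun z : P × E => T z.1 - t • u := Continuous.measurable (by fun_prop)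
        exact ((((hind.comp h1).add (hind.comp h2)).mul (hwm.comp measurable_snd)).const_mul _)
    _ ≤ ∫⁻ y, ENNReal.ofReal t * ((V + V) * w y) ∂μ := by
        refine lintegral_mono fun y => ?_
        have h1 : Measurable fun p : P => B.indicator (1 : E → ℝ≥0∞) (T p - t • u + t • y) :=
          hind.comp (Continuous.measurable (by fun_prop))
        have h2 : Measurable fun p : P => B.indicator (1 : E → ℝ≥0∞) (T p - t • u) :=
          hind.comp (Continuous.measurable (by fun_prop))
        rw [lintegral_const_mul _ ((h1.fun_add h2).mul_const _),
          lintegral_mul_const _ (h1.fun_add h2),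
          lintegral_add_left h1]
        gcongr
        · simpa only [sub_eq_add_neg, add_assoc] using
            lintegral_indicator_closedBall_comp_le (ν := ν) hST R (-(t • u) + t • y)
        · simpa only [sub_eq_add_neg] using
            lintegral_indicator_closedBall_comp_le (ν := ν) hST R (-(t • u))
    _ = ENNReal.ofReal t * ∫⁻ y, (V + V) * w y ∂μ :=
        lintegral_const_mul _ (hwm.const_mul _)

/-- Averages at a scale `t ≥ 1`, integrated over the translates along a subspace. -/
lemma exists_lintegral_enorm_integral_dilation_le (hST : Function.LeftInverse S T) {Φ : E → ℝ}
    (hΦ : Integrable Φ μ) {φ : E → ℝ} {C s : ℝ} (hC : 0 ≤ C)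
    (hφC : ∀ y, |φ y| ≤ C * (1 + ‖y‖) ^ (-s)) (hs : (finrank ℝ P : ℝ) < s) :
    ∃ D : ℝ≥0∞, D ≠ ⊤ ∧ ∀ t : ℝ, 1 ≤ t → ∀ u : E,
      ∫⁻ p, ‖∫ x, Φ x * φ (t⁻¹ • (x - T p + t • u)) ∂μ‖ₑ ∂ν ≤ ENNReal.ofReal (t ^ s) * D := by
  set A : ℝ := max ‖S‖ 1
  have hA1 : 1 ≤ A := le_max_right _ _
  have hs0 : 0 ≤ s := (Nat.cast_nonneg _).trans hs.le
  set w : P → ℝ≥0∞ := fun q => ENNReal.ofReal (C * A ^ s * (1 + ‖q‖) ^ (-s)) with hw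
  have hwm : Measurable w := by fun_prop
  have hwfin : ∫⁻ q, w q ∂ν ≠ ⊤ :=
    ((integrable_one_add_norm (μ := ν) hs).const_mul (C * A ^ s)).lintegral_lt_top.ne
  obtain ⟨Φ', hΦ'm, hΦ'⟩ := hΦ.aestronglyMeasurable
  have hpt : ∀ t : ℝ, 1 ≤ t → ∀ (u x : E) (p : P), ‖φ (t⁻¹ • (x - T p + t • u))‖ₑ ≤
      ENNReal.ofReal (t ^ s) * w (p - S (x + t • u)) := by
    intro t ht u x p
    have ht0 : 0 < t := by linarith
    set y := t⁻¹ • (x - T p + t • u) with hy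
    have hSy : S y = -(t⁻¹ • (p - S (x + t • u))) := by
      rw [hy, map_smul, ← smul_neg]
      simp only [map_add, map_sub, hST p]
      congr 1
      abel
    have hle : ‖p - S (x + t • u)‖ ≤ t * (A * ‖y‖) := by
      have h : ‖S y‖ ≤ A * ‖y‖ := (S.le_opNorm y).trans (by gcongr; exact le_max_left _ _)
      rw [hSy, norm_neg, norm_smul, norm_inv, Real.norm_eq_abs t, abs_of_pos ht0] at h
      rwa [inv_mul_le_iff₀ ht0] at h
    have hle' : 1 + ‖p - S (x + t • u)‖ ≤ t * A * (1 + ‖y‖) := by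
      nlinarith [one_le_mul_of_one_le_of_one_le ht hA1]
    have hpow : (1 + ‖y‖) ^ (-s) ≤ t ^ s * (A ^ s * (1 + ‖p - S (x + t • u)‖) ^ (-s)) := by
      rw [Real.rpow_neg (by positivity), Real.rpow_neg (by positivity), ← mul_assoc,
        ← Real.mul_rpow ht0.le (by positivity), ← div_eq_mul_inv,
        inv_le_iff_one_le_mul₀ (by positivity), div_mul_eq_mul_div,
        one_le_div (by positivity), ← Real.mul_rpow (by positivity) (by positivity)]
      gcongr
    rw [← ofReal_norm, hw, ← ENNReal.ofReal_mul (by positivity)]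
    refine ENNReal.ofReal_le_ofReal ((hφC y).trans ?_)
    calc C * (1 + ‖y‖) ^ (-s) ≤ C * (t ^ s * (A ^ s * (1 + ‖p - S (x + t • u)‖) ^ (-s))) := by
          gcongr
      _ = _ := by ring
  refine ⟨(∫⁻ x, ‖Φ x‖ₑ ∂μ) * ∫⁻ q, w q ∂ν, ENNReal.mul_ne_top hΦ.2.ne hwfin, fun t ht u => ?_⟩
  have hΦe : Measurable fun x => ‖Φ' x‖ₑ := hΦ'm.measurable.enorm
  calc ∫⁻ p, ‖∫ x, Φ x * φ (t⁻¹ • (x - T p + t • u)) ∂μ‖ₑ ∂ν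
      ≤ ∫⁻ p, ∫⁻ x, ‖Φ' x‖ₑ * (ENNReal.ofReal (t ^ s) * w (p - S (x + t • u))) ∂μ ∂ν := by
        refine lintegral_mono fun p => (enorm_integral_le_lintegral_enorm _).trans
          (lintegral_mono_ae (hΦ'.mono fun x hx => ?_))
        rw [enorm_mul, hx]
        gcongr
        exact hpt t ht u x p
    _ = ∫⁻ x, ∫⁻ p, ‖Φ' x‖ₑ * (ENNReal.ofReal (t ^ s) * w (p - S (x + t • u))) ∂ν ∂μ := by
        refine lintegral_lintegral_swap (Measurable.aemeasurable ?_)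
        have h1 : Measurable fun z : P × E => z.1 - S (z.2 + t • u) :=
          Continuous.measurable (by fun_prop)
        exact (hΦe.comp measurable_snd).mul ((hwm.comp h1).const_mul _)
    _ = ∫⁻ x, ‖Φ' x‖ₑ * (ENNReal.ofReal (t ^ s) * ∫⁻ q, w q ∂ν) ∂μ := by
        refine lintegral_congr fun x => ?_
        have h1 : Measurable fun p : P => w (p - S (x + t • u)) :=
          hwm.comp (Continuous.measurable (by fun_prop))
        rw [lintegral_const_mul _ (h1.const_mul _), lintegral_const_mul _ h1,
          lintegral_sub_right_eq_self]
    _ = (∫⁻ x, ‖Φ' x‖ₑ ∂μ) * (ENNReal.ofReal (t ^ s) * ∫⁻ q, w q ∂ν) :=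
        lintegral_mul_const _ hΦe
    _ = _ := by
        rw [lintegral_congr_ae (hΦ'.mono fun x hx => by simp only [hx] :
          (fun x => ‖Φ x‖ₑ) =ᵐ[μ] fun x => ‖Φ' x‖ₑ)]
        ring

end Slices

lemma hasFDerivAt_gss {m : ℕ} (y : Idx m → ℝ) :
    HasFDerivAt gss (gss y •
      (-Real.pi • ∑ k, (2 * y k) • (ContinuousLinearMap.proj k : (Idx m → ℝ) →L[ℝ] ℝ))) y := by
  unfold gss
  refine HasFDerivAt.exp (HasFDerivAt.const_mul ?_ _)
  refine HasFDerivAt.fun_sum fun k _ => ?_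
  simpa using ((ContinuousLinearMap.proj k : (Idx m → ℝ) →L[ℝ] ℝ).hasFDerivAt (x := y)).pow 2

lemma fderiv_gss_single {m : ℕ} (k : Idx m) (y : Idx m → ℝ) :
    fderiv ℝ gss y (Pi.single k 1) = -(2 * Real.pi) * (y k * gss y) := by
  rw [(hasFDerivAt_gss y).fderiv]
  simp only [_root_.smul_apply, _root_.sum_apply,
    ContinuousLinearMap.proj_apply, Pi.single_apply, smul_eq_mul, mul_ite, mul_one, mul_zero,
    Finset.sum_ite_eq', Finset.mem_univ, if_true]
  ring

lemma ddg_eq {m : ℕ} (i : Fin m) (x : Idx m → ℝ) :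
    ddg i x = 4 * Real.pi ^ 2 * (x (Sum.inl i) * x (Sum.inr i) * gss x) := by
  have h : HasFDerivAt (fun y : Idx m → ℝ => -(2 * Real.pi) * (y (Sum.inl i) * gss y)) _ x :=
    (((ContinuousLinearMap.proj (Sum.inl i) : (Idx m → ℝ) →L[ℝ] ℝ).hasFDerivAt (x := x)).mul
      (hasFDerivAt_gss x)).const_mul _
  simp only [ddg, fderiv_gss_single]
  rw [h.fderiv]
  simp [Pi.single_apply]
  ring

lemma continuous_ddg {m : ℕ} (i : Fin m) : Continuous (ddg (m := m) i) := by
  have h : ddg (m := m) i = fun x => 4 * Real.pi ^ 2 * (x (Sum.inl i) * x (Sum.inr i) *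
      Real.exp (-Real.pi * ∑ k, (x k) ^ 2)) := funext (ddg_eq i)
  rw [h]
  fun_prop

lemma integral_ddg {m : ℕ} (i : Fin m) : ∫ x, ddg (m := m) i x = 0 := by
  have hs : MeasurePreserving
      (fun (x : Idx m → ℝ) k => (if k = Sum.inl i then Neg.neg else id : ℝ → ℝ) (x k)) := by
    refine volume_preserving_pi fun k => ?_
    split_ifs
    · exact Measure.measurePreserving_neg volume
    · exact MeasurePreserving.id volume
  have hodd : ∀ x : Idx m → ℝ,
      ddg i (fun k => (if k = Sum.inl i then Neg.neg else id : ℝ → ℝ) (x k)) = -ddg i x := by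
    intro x
    have hsq : ∀ k, ((if k = Sum.inl i then Neg.neg else id : ℝ → ℝ) (x k)) ^ 2 = x k ^ 2 := by
      intro k
      split_ifs <;> simp
    simp only [ddg_eq, gss, hsq]
    simp
  have h := integral_map (μ := volume) hs.measurable.aemeasurable
    (continuous_ddg i).aestronglyMeasurable
  rw [hs.map_eq] at h
  simp only [hodd, integral_neg] at h
  linarith

lemma abs_ddg_le {m : ℕ} (i : Fin m) (x : Idx m → ℝ) :
    |ddg i x| ≤ 4 * Real.pi ^ 2 * (‖x‖ ^ 2 * Real.exp (-‖x‖ ^ 2)) := by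
  have hg : gss x ≤ Real.exp (-‖x‖ ^ 2) := by
    have hle : ‖x‖ ^ 2 ≤ ∑ k, x k ^ 2 := by
      have hsum : 0 ≤ ∑ k, x k ^ 2 := Finset.sum_nonneg fun _ _ => sq_nonneg _
      rw [← Real.le_sqrt (norm_nonneg _) hsum]
      refine (pi_norm_le_iff_of_nonneg (Real.sqrt_nonneg _)).2 fun k => ?_
      rw [Real.norm_eq_abs]
      exact Real.abs_le_sqrt
        (Finset.single_le_sum (f := fun k => x k ^ 2) (fun _ _ => sq_nonneg _) (Finset.mem_univ k))
    refine Real.exp_le_exp.2 ?_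
    nlinarith [Real.pi_gt_three, sq_nonneg ‖x‖]
  have hpos : 0 ≤ gss x := (Real.exp_pos _).le
  have hx : |x (Sum.inl i) * x (Sum.inr i)| ≤ ‖x‖ ^ 2 := by
    rw [abs_mul, sq]
    exact mul_le_mul (norm_le_pi_norm x _) (norm_le_pi_norm x _) (abs_nonneg _) (norm_nonneg _)
  rw [ddg_eq, abs_mul, abs_mul _ (gss x), abs_of_nonneg hpos,
    abs_of_nonneg (show 0 ≤ 4 * Real.pi ^ 2 by positivity)]
  gcongr

lemma one_add_pow_mul_exp_neg_sq_le (n : ℕ) {s : ℝ} (hs : 0 ≤ s) :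
    (1 + s) ^ (2 * n) * Real.exp (-s ^ 2) ≤ 2 ^ n * n.factorial * Real.exp 1 := by
  have h1 : (1 + s) ^ (2 * n) ≤ 2 ^ n * (1 + s ^ 2) ^ n := by
    rw [pow_mul, ← mul_pow]
    gcongr
    nlinarith [sq_nonneg (1 - s)]
  have h2 : (1 + s ^ 2) ^ n ≤ n.factorial * Real.exp (1 + s ^ 2) := by
    have := Real.pow_div_factorial_le_exp (x := 1 + s ^ 2) (by positivity) n
    rwa [div_le_iff₀ (by positivity), mul_comm] at this
  calc (1 + s) ^ (2 * n) * Real.exp (-s ^ 2)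
      ≤ 2 ^ n * (n.factorial * Real.exp (1 + s ^ 2)) * Real.exp (-s ^ 2) := by
        gcongr
        exact h1.trans (by gcongr)
    _ = 2 ^ n * n.factorial * (Real.exp (1 + s ^ 2) * Real.exp (-s ^ 2)) := by ring
    _ = 2 ^ n * n.factorial * Real.exp 1 := by rw [← Real.exp_add]; ring_nf

lemma exists_abs_ddg_le_rpow {m : ℕ} (i : Fin m) (n : ℕ) :
    ∃ C, 0 ≤ C ∧ ∀ x : Idx m → ℝ, |ddg i x| ≤ C * (1 + ‖x‖) ^ (-((2 * n : ℕ) : ℝ)) := by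
  refine ⟨4 * Real.pi ^ 2 * (2 ^ (n + 1) * (n + 1).factorial * Real.exp 1), by positivity,
    fun x => ?_⟩
  rw [Real.rpow_neg (by positivity), Real.rpow_natCast, ← div_eq_mul_inv,
    le_div_iff₀ (by positivity)]
  calc |ddg i x| * (1 + ‖x‖) ^ (2 * n)
      ≤ 4 * Real.pi ^ 2 * ((1 + ‖x‖) ^ 2 * Real.exp (-‖x‖ ^ 2)) * (1 + ‖x‖) ^ (2 * n) := by
        gcongr
        refine (abs_ddg_le i x).trans ?_
        gcongr
        linarith
    _ = 4 * Real.pi ^ 2 * ((1 + ‖x‖) ^ (2 * (n + 1)) * Real.exp (-‖x‖ ^ 2)) := by ring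
    _ ≤ _ := mul_le_mul_of_nonneg_left
        (one_add_pow_mul_exp_neg_sq_le (n + 1) (norm_nonneg x)) (by positivity)

lemma contDiff_prod_proj {m : ℕ} {F : Corner m → (Fin m → ℝ) → ℝ}
    (hF : ∀ j, ContDiff ℝ (⊤ : ℕ∞) (F j)) :
    ContDiff ℝ (⊤ : ℕ∞) fun x : Idx m → ℝ => ∏ j, F j (proj j x) := by
  refine contDiff_prod fun j _ => (hF j).comp ?_
  unfold proj
  fun_prop

lemma exists_prod_proj_eq_zero {m : ℕ} {F : Corner m → (Fin m → ℝ) → ℝ}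
    (hF : ∀ j, HasCompactSupport (F j)) :
    ∃ R : ℝ, ∀ x : Idx m → ℝ, R < ‖x‖ → ∏ j, F j (proj j x) = 0 := by
  have hb : ∀ j, ∃ R, ∀ y, R < ‖y‖ → F j y = 0 := fun j => by
    obtain ⟨R, hR⟩ := (hF j).isCompact.isBounded.subset_closedBall 0
    refine ⟨R, fun y hy => image_eq_zero_of_notMem_tsupport fun hmem => ?_⟩
    exact absurd (mem_closedBall_zero_iff.1 (hR hmem)) hy.not_ge
  choose R hR using hb
  refine ⟨∑ j, |R j|, fun x hx => ?_⟩
  obtain ⟨k, hk⟩ : ∃ k, ∑ j, |R j| < ‖x k‖ := by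
    by_contra! h
    exact hx.not_ge
      ((pi_norm_le_iff_of_nonneg (Finset.sum_nonneg fun _ _ => abs_nonneg _)).2 h)
  obtain ⟨j, l, hjl⟩ : ∃ (j : Corner m) (l : Fin m), sel j l = k := by
    rcases k with l | l
    · exact ⟨fun _ => 0, l, by simp [sel]⟩
    · exact ⟨fun _ => 1, l, by simp [sel]⟩
  refine Finset.prod_eq_zero (Finset.mem_univ j) (hR j _ ?_)
  calc R j ≤ |R j| := le_abs_self _
    _ ≤ ∑ j, |R j| :=
      Finset.single_le_sum (f := fun j => |R j|) (fun _ _ => abs_nonneg _) (Finset.mem_univ j)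
    _ < ‖x k‖ := hk
    _ = ‖proj j x l‖ := by rw [proj, hjl]
    _ ≤ ‖proj j x‖ := norm_le_pi_norm _ _

/-- The substitution `x = a + t y` in an average against a dilated kernel. -/
lemma integral_mul_dil {m : ℕ} (Φ φ : (Idx m → ℝ) → ℝ) {t : ℝ} (ht : 0 < t) (a : Idx m → ℝ) :
    ∫ x, Φ x * dil t φ (x - a) = ∫ y, Φ (a + t • y) * φ y := by
  have h1 := Measure.integral_comp_smul_of_nonneg volume
    (fun x : Idx m → ℝ => Φ (a + x) * φ (t⁻¹ • x)) t (hR := ht.le)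
  simp only [inv_smul_smul₀ ht.ne', Module.finrank_fintype_fun_eq_card, Fintype.card_sum,
    Fintype.card_fin, ← two_mul, smul_eq_mul] at h1
  rw [h1, ← integral_const_mul, ← integral_add_left_eq_self _ a]
  refine integral_congr_ae (.of_forall fun x => ?_)
  simp only [dil, add_sub_cancel_left]
  ring

/-- Lemma (integrability over the upper half space). -/
theorem statement7 (m : ℕ) (hm : 2 ≤ m) (J : Matrix (Idx m) (Fin m) ℝ)
    (hJ : Function.Injective J.mulVec) (u : Idx m → ℝ) (i : Fin m)
    (F : Corner m → (Fin m → ℝ) → ℝ)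
    (hF : ∀ j, ContDiff ℝ (⊤ : ℕ∞) (F j) ∧ HasCompactSupport (F j)) :
    (∫⁻ t in Set.Ioi (0:ℝ), ENNReal.ofReal t⁻¹ *
      ∫⁻ p : Fin m → ℝ, ENNReal.ofReal
        |∫ x : Idx m → ℝ, (∏ j, F j (proj j x)) *
          dil t (ddg i) (x - J.mulVec p + t • u)|) < ⊤ := by
  set T : (Fin m → ℝ) →L[ℝ] (Idx m → ℝ) := J.mulVecLin.toContinuousLinearMap
  obtain ⟨S', hS'⟩ := J.mulVecLin.exists_leftInverse_of_injective (LinearMap.ker_eq_bot.2 hJ)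
  set S : (Idx m → ℝ) →L[ℝ] (Fin m → ℝ) := S'.toContinuousLinearMap
  have hST : Function.LeftInverse S T := fun p => LinearMap.congr_fun hS' p
  set Φ : (Idx m → ℝ) → ℝ := fun x => ∏ j, F j (proj j x)
  obtain ⟨R, hR⟩ := exists_prod_proj_eq_zero fun j => (hF j).2
  have hΦs : ContDiff ℝ (⊤ : ℕ∞) Φ := contDiff_prod_proj fun j => (hF j).1
  have hΦc : HasCompactSupport Φ :=
    .intro (isCompact_closedBall 0 R) fun x hx => hR x (by simpa using hx)
  obtain ⟨K, hK⟩ := ContDiff.lipschitzWith_of_hasCompactSupport hΦc hΦs (by simp)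
  obtain ⟨C, hC, hdecay⟩ := exists_abs_ddg_le_rpow i (m + 1)
  have hdecay' : ∀ y : Idx m → ℝ, |ddg i y| ≤ C * (1 + ‖y‖) ^ (-(m + 1 : ℝ)) := fun y => by
    refine (hdecay y).trans ?_
    gcongr
    · linarith [norm_nonneg y]
    · push_cast
      linarith
  obtain ⟨D₀, hD₀, hsmall⟩ := exists_lintegral_enorm_integral_comp_le (μ := volume) (ν := volume)
    hST hK hR (continuous_ddg i) hdecay (by simp; linarith) (integral_ddg i)
  obtain ⟨D₁, hD₁, hlarge⟩ := exists_lintegral_enorm_integral_dilation_le (μ := volume)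
    (ν := volume) hST (hΦs.continuous.integrable_of_hasCompactSupport hΦc) hC hdecay' (by simp)
  simp only [← Real.norm_eq_abs, ofReal_norm]
  rw [← Set.Ioc_union_Ioi_eq_Ioi (zero_le_one' ℝ)]
  refine (lintegral_union_le _ _ _).trans_lt (ENNReal.add_lt_top.2 ⟨?_, ?_⟩)
  · have hle : ∀ t ∈ Set.Ioc (0 : ℝ) 1, ENNReal.ofReal t⁻¹ *
        ∫⁻ p : Fin m → ℝ, ‖∫ x, Φ x * dil t (ddg i) (x - J.mulVec p + t • u)‖ₑ ≤ D₀ := by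
      intro t ht
      have hsub : ∀ p : Fin m → ℝ, ∫ x, Φ x * dil t (ddg i) (x - J.mulVec p + t • u) =
          ∫ y, Φ (T p - t • u + t • y) * ddg i y := fun p => by
        rw [← integral_mul_dil Φ (ddg i) ht.1]
        simp only [sub_sub_eq_add_sub, sub_add_eq_add_sub]
        rfl
      simp only [hsub]
      calc _ ≤ ENNReal.ofReal t⁻¹ * (ENNReal.ofReal t * D₀) := by
            gcongr
            exact hsmall t ht.1 u
        _ = D₀ := by
            rw [← mul_assoc, ← ENNReal.ofReal_mul (inv_nonneg.2 ht.1.le),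
              inv_mul_cancel₀ ht.1.ne', ENNReal.ofReal_one, one_mul]
    calc _ ≤ ∫⁻ _ in Set.Ioc (0 : ℝ) 1, D₀ := setLIntegral_mono' measurableSet_Ioc hle
      _ < ⊤ := by simp [hD₀.lt_top]
  · have hle : ∀ t ∈ Set.Ioi (1 : ℝ), ENNReal.ofReal t⁻¹ *
        ∫⁻ p : Fin m → ℝ, ‖∫ x, Φ x * dil t (ddg i) (x - J.mulVec p + t • u)‖ₑ ≤
          ENNReal.ofReal (t ^ (-2 : ℝ)) * D₁ := by
      intro t (ht : 1 < t)
      have ht0 : 0 < t := by linarith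
      have hpull : ∀ p : Fin m → ℝ, ‖∫ x, Φ x * dil t (ddg i) (x - J.mulVec p + t • u)‖ₑ =
          ENNReal.ofReal (t ^ (2 * m))⁻¹ *
            ‖∫ x, Φ x * ddg i (t⁻¹ • (x - T p + t • u))‖ₑ := fun p => by
        simp only [dil, mul_left_comm (Φ _)]
        rw [integral_const_mul, enorm_mul, Real.enorm_of_nonneg (by positivity)]
        rfl
      simp only [hpull]
      rw [lintegral_const_mul' _ _ ENNReal.ofReal_ne_top]
      calc _ ≤ ENNReal.ofReal t⁻¹ * (ENNReal.ofReal (t ^ (2 * m))⁻¹ *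
              (ENNReal.ofReal (t ^ (m + 1 : ℝ)) * D₁)) := by
            gcongr
            exact hlarge t ht.le u
        _ = ENNReal.ofReal (t⁻¹ * ((t ^ (2 * m))⁻¹ * t ^ (m + 1 : ℝ))) * D₁ := by
            rw [ENNReal.ofReal_mul (by positivity), ENNReal.ofReal_mul (by positivity)]
            ring
        _ ≤ ENNReal.ofReal (t ^ (-2 : ℝ)) * D₁ := by
            gcongr
            rw [← Real.rpow_natCast, ← Real.rpow_neg ht0.le, ← Real.rpow_neg_one,
              ← Real.rpow_add ht0, ← Real.rpow_add ht0]
            have hm' : (2 : ℝ) ≤ m := by exact_mod_cast hm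
            refine Real.rpow_le_rpow_of_exponent_le ht.le ?_
            push_cast
            linarith
    calc _ ≤ ∫⁻ t in Set.Ioi (1 : ℝ), ENNReal.ofReal (t ^ (-2 : ℝ)) * D₁ :=
          setLIntegral_mono' measurableSet_Ioi hle
      _ = (∫⁻ t in Set.Ioi (1 : ℝ), ENNReal.ofReal (t ^ (-2 : ℝ))) * D₁ :=
          lintegral_mul_const' _ _ hD₁
      _ < ⊤ := ENNReal.mul_lt_top
          (integrableOn_Ioi_rpow_of_lt (by norm_num) one_pos).lintegral_lt_top hD₁.lt_top

end SBL
end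
end
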